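/- Define the shifted noise coefficients ρ̂_{i,j,r}^{(t)} := ρ_{i,j,r}^{(t)} + y_i·⟨w_r^{(0)}, x_{i,j}⟩/‖x_{i,j}‖₂² and their maximum over unlearnable noise patches ρ̂_max^{(t)} := max over r ∈ [m], k ∈ S_U, q ≠ s(X_k) of ρ̂_{k,q,r}^{(t)}. On the event E, under Condition (H) in the sparse-unlearnable regime, suppose ρ̂_max^{(t)} ≤ C_1/((mP)^{1/3} σ_n² d). Then for every unlearnable sample i ∈ S_U at iteration t, 1/(1 + exp(4C_1³)) ≤ ψ(y_i f_{W^{(t)}}(X̃_i^{(t)})) ≤ 1. -/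

import Mathlib

open Finset MeasureTheory ProbabilityTheory
open scoped ENNReal NNReal

noncomputable section

namespace AD

/-- Cubic ReLU activation. -/
def phi (z : ℝ) : ℝ := (max 0 z) ^ 3

/-- Negative sigmoid `ψ(z) = 1/(1+e^z)`. -/
def psi (z : ℝ) : ℝ := 1 / (1 + Real.exp z)

/-- Logistic loss `ℓ(z) = log(1+e^{-z})`. -/
def lloss (z : ℝ) : ℝ := Real.log (1 + Real.exp (-z))

/-- Logistic sigmoid `σ(z) = 1/(1+e^{-z})`. -/
def sigm (z : ℝ) : ℝ := 1 / (1 + Real.exp (-z))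

/-- Euclidean inner product on `Fin d → ℝ`. -/
def dot {d : ℕ} (a b : Fin d → ℝ) : ℝ := ∑ k, a k * b k

/-- Squared Euclidean norm. -/
def sqnorm {d : ℕ} (a : Fin d → ℝ) : ℝ := dot a a

/-- First standard basis vector `e₁` (the learnable feature `u`). -/
def e1 (d : ℕ) (hd : 0 < d) : Fin d → ℝ := fun k => if k = (⟨0, hd⟩ : Fin d) then 1 else 0

/-- Last standard basis vector `e_d` (the unlearnable feature `v`). -/
def eLast (d : ℕ) (_hd : 0 < d) : Fin d → ℝ := fun k => if (k : ℕ) = d - 1 then 1 else 0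

/-- The two-layer student network
`f_W(X) = ∑_r ∑_p [φ(⟨w_r,x_p⟩) − φ(−⟨w_r,x_p⟩)]`. -/
def netOut {m P d : ℕ} (w : Fin m → Fin d → ℝ) (X : Fin P → Fin d → ℝ) : ℝ :=
  ∑ r, ∑ p, (phi (dot (w r) (X p)) - phi (-(dot (w r) (X p))))

/-- The concentration event `E` of the paper, i.e. properties (P1)–(P8), stated for
training patches `x`, initialization `w0`, labels `y` and signal-patch indices `sig`. -/
def EventEOn (N m P d : ℕ) (hd : 0 < d) (sigman sigma0 delta : ℝ)
    (y : Fin N → ℝ) (sig : Fin N → Fin P)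
    (x : Fin N → Fin P → Fin d → ℝ) (w0 : Fin m → Fin d → ℝ) : Prop :=
  -- (P1) noise-patch norms
  (∀ i j, j ≠ sig i →
      sigman ^ 2 * d / 2 ≤ sqnorm (x i j) ∧ sqnorm (x i j) ≤ 3 * sigman ^ 2 * d / 2) ∧
  -- (P2) pairwise noise inner products
  (∀ i k j q, j ≠ sig i → q ≠ sig k → ((i, j) : Fin N × Fin P) ≠ (k, q) →
      |dot (x i j) (x k q)| ≤
        2 * sigman ^ 2 * Real.sqrt ((d : ℝ) * Real.log ((16 : ℝ) * N ^ 2 * P ^ 2 / delta))) ∧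
  -- (P3) sup-norm of noise patches
  (∀ i j, j ≠ sig i → ∀ kk : Fin d,
      |x i j kk| ≤ sigman * Real.sqrt (2 * Real.log ((16 : ℝ) * d * N * P / delta))) ∧
  -- (P4) initialization norms
  (∀ r, Real.sqrt (sqnorm (w0 r)) ≤ 2 * sigma0 * Real.sqrt d) ∧
  -- (P5) initialization signal correlation
  (∀ r, |dot (w0 r) (e1 d hd)| ≤ sigma0 * Real.sqrt (2 * Real.log ((16 : ℝ) * m / delta))) ∧
  -- (P6) initialization noise correlations
  (∀ r i j, j ≠ sig i →
      |dot (w0 r) (x i j)| ≤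
        2 * sigma0 * sigman * Real.sqrt ((d : ℝ) * Real.log ((16 : ℝ) * N * m * P / delta))) ∧
  -- (P7) maximal initial signal alignment
  (∃ r, sigma0 / 2 ≤ dot (w0 r) (e1 d hd)) ∧
  -- (P8) maximal initial noise alignment
  (∀ i j, j ≠ sig i → ∃ r, sigma0 * sigman * Real.sqrt d / 4 ≤ y i * dot (w0 r) (x i j))
structure Setting where
  N : ℕ
  m : ℕ
  P : ℕ
  d : ℕ
  T : ℕ
  hN : 0 < N
  hm : 0 < m
  hP : 0 < P
  hd : 0 < d
  alpha : ℝ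
  sigman : ℝ
  sigma0 : ℝ
  eta : ℝ
  eps : ℝ
  delta : ℝ
  halpha : 0 < alpha
  hsigman : 0 < sigman
  hsigma0 : 0 < sigma0
  heta : 0 < eta
  heps : 0 < eps
  hepsalpha : eps < alpha
  hdelta0 : 0 < delta
  hdelta1 : delta < 1
  /-- labels -/
  y : Fin N → ℝ
  hy : ∀ i, y i = 1 ∨ y i = -1
  /-- signal patch index -/
  sig : Fin N → Fin P
  /-- learnable samples -/
  SL : Finset (Fin N)
  /-- unlearnable samples -/
  SU : Finset (Fin N)
  hunion : SL ∪ SU = Finset.univ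
  hdisj : Disjoint SL SU
  /-- training patches -/
  x : Fin N → Fin P → Fin d → ℝ
  hsigL : ∀ i ∈ SL, x i (sig i) = (alpha * y i) • e1 d hd
  hsigU : ∀ i ∈ SU, x i (sig i) = (alpha * y i) • eLast d hd
  hnoiseU : ∀ i j, j ≠ sig i → dot (x i j) (e1 d hd) = 0
  hnoiseV : ∀ i j, j ≠ sig i → dot (x i j) (eLast d hd) = 0
  /-- weight trajectory -/
  w : ℕ → Fin m → Fin d → ℝ
  hwperp : ∀ t r, dot (w t r) (eLast d hd) = 0
  /-- adversarial training examples at each iteration -/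
  xadv : ℕ → Fin N → Fin P → Fin d → ℝ
  hadvnoise : ∀ t i j, j ≠ sig i → xadv t i j = x i j
  hadvspan : ∀ t i, ∃ c : ℝ, xadv t i (sig i) - x i (sig i) = c • x i (sig i)
  hadvlinf : ∀ t i p k, |xadv t i p k - x i p k| ≤ eps
  hadvlearn : ∀ t : ℕ, ∀ i ∈ SL,
    alpha - eps ≤ y i * dot (xadv t i (sig i)) (e1 d hd) ∧
      y i * dot (xadv t i (sig i)) (e1 d hd) ≤ alpha

namespace Setting

variable (S : Setting)

/-- Adversarial margin `y_i f_{W^{(t)}}(X̃_i^{(t)})`. -/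
def marg (t : ℕ) (i : Fin S.N) : ℝ := S.y i * netOut (S.w t) (S.xadv t i)

/-- Signal coordinate `w_{r,1}^{(t)}`. -/
def wsig (t : ℕ) (r : Fin S.m) : ℝ := S.w t r ⟨0, S.hd⟩

/-- Unlearnable fraction `p_un = |S_U|/N`. -/
def pun : ℝ := (S.SU.card : ℝ) / S.N

/-- The adversarial-training gradient-descent dynamics. -/
def ATDyn : Prop :=
  ∀ t r, S.w (t + 1) r = S.w t r +
    (3 * S.eta / S.N) •
      ∑ i : Fin S.N, (psi (S.marg t i) * S.y i) •
        ∑ p : Fin S.P, (dot (S.w t r) (S.xadv t i p)) ^ 2 • S.xadv t i p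

/-- The signed gradient weight of sample `i` at iteration `t` under adversarial
distillation from teacher logits `fT`. -/
def gAD (fT : Fin S.N → ℝ) (t : ℕ) (i : Fin S.N) : ℝ :=
  sigm (S.y i * fT i) * psi (S.marg t i) - sigm (-(S.y i * fT i)) * psi (-(S.marg t i))

/-- The adversarial-distillation gradient-descent dynamics. -/
def ADDyn (fT : Fin S.N → ℝ) : Prop :=
  ∀ t r, S.w (t + 1) r = S.w t r +
    (3 * S.eta / S.N) •
      ∑ i : Fin S.N, (S.gAD fT t i * S.y i) •
        ∑ p : Fin S.P, (dot (S.w t r) (S.xadv t i p)) ^ 2 • S.xadv t i p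

/-- Noise coefficients `ρ_{i,j,r}^{(t)}` (adversarial training). -/
def rho (i : Fin S.N) (j : Fin S.P) (r : Fin S.m) : ℕ → ℝ
  | 0 => 0
  | t + 1 => rho i j r t + (3 * S.eta / S.N) * psi (S.marg t i) * (dot (S.w t r) (S.x i j)) ^ 2

/-- Noise coefficients under adversarial distillation. -/
def rhoAD (fT : Fin S.N → ℝ) (i : Fin S.N) (j : Fin S.P) (r : Fin S.m) : ℕ → ℝ
  | 0 => 0
  | t + 1 => rhoAD fT i j r t + (3 * S.eta / S.N) * S.gAD fT t i * (dot (S.w t r) (S.x i j)) ^ 2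

/-- The event `E` for a setting. -/
def EventE : Prop :=
  EventEOn S.N S.m S.P S.d S.hd S.sigman S.sigma0 S.delta S.y S.sig S.x (S.w 0)

/-- Condition (H): the parameter requirements of Condition 4.1 of the paper
(without the unlearnable-fraction regime item, which is imposed separately). -/
def CondH (C : ℝ) : Prop :=
  1 ≤ C ∧
  -- training horizon
  C * S.N / (S.eta * S.sigma0 * S.sigman ^ 3 * ((S.d : ℝ) * Real.sqrt S.d)) ≤ (S.T : ℝ) ∧
  -- dimension
  C * S.m ^ 2 * S.P ^ 2 * S.N ^ 2 *
      (Real.log ((S.T : ℝ) * S.N * S.m * S.P / S.delta)) ^ 4 ≤ (S.d : ℝ) ∧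
  -- signal strength
  C * S.sigman * Real.sqrt S.d * Real.log ((S.T : ℝ) * S.N * S.m * S.P / S.delta) /
      (((S.N : ℝ) * (1 - S.pun)) ^ ((1 : ℝ) / 3)) ≤ S.alpha ∧
  -- initialization scale
  S.sigma0 ≤
    C⁻¹ *
        min (min (1 / ((S.m : ℝ) ^ ((2 : ℝ) / 3) * (S.P : ℝ) ^ ((2 : ℝ) / 3) *
            S.sigman * Real.sqrt S.d))
          (1 / (S.alpha * (S.m : ℝ) ^ ((2 : ℝ) / 3))))
          (1 / (S.sigman * S.m ^ 2 * Real.sqrt S.P * S.d)) /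
      Real.log ((S.T : ℝ) * S.d * S.N * S.m * S.P / S.delta) ∧
  -- learning rate
  S.eta ≤
    C⁻¹ * min (min (1 / (S.alpha ^ 3 * S.sigma0)) (1 / (S.sigman ^ 2 * S.d))) (1 / S.alpha ^ 2) /
      Real.log ((S.T : ℝ) * S.N * S.m * S.P / S.delta) ∧
  -- adversarial budget
  C * S.sigman * S.m * Real.sqrt S.P * Real.log ((S.T : ℝ) * S.d * S.N * S.P / S.delta) ≤ S.eps ∧
  S.eps < C⁻¹ * min S.alpha (1 / (S.m * S.sigma0 * S.d)) ∧
  -- width and number of patches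
  C * Real.log ((S.N : ℝ) * S.P / S.delta) ≤ (S.m : ℝ) ∧
  (S.m : ℝ) ≤ C * Real.log S.d ^ C ∧
  2 ≤ S.P ∧ (S.P : ℝ) ≤ C

/-- The sparse-unlearnable regime of Condition 4.1. -/
def SparseRegime (C : ℝ) : Prop :=
  C / S.N ≤ S.pun ∧ S.pun ≤ C⁻¹ * Real.log S.d / S.N ∧
  C * S.m * S.P * Real.log ((S.T : ℝ) * S.d * S.N * S.m * S.P / S.delta) ≤ (S.N : ℝ)

/-- The noise-stability bound (NS) on learnable samples at iteration `t`. -/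
def NS (t : ℕ) : Prop :=
  ∀ r : Fin S.m, ∀ i ∈ S.SL, ∀ j, j ≠ S.sig i →
    |dot (S.w t r) (S.x i j)| ≤
      3 * S.sigma0 * S.sigman *
          Real.sqrt ((S.d : ℝ) * Real.log ((16 : ℝ) * S.N * S.m * S.P / S.delta)) +
        21 * S.pun * S.N * S.P * Real.log S.T ^ ((1 : ℝ) / 3) / Real.sqrt S.d *
          Real.sqrt (Real.log ((16 : ℝ) * S.N ^ 2 * S.P ^ 2 / S.delta))

/-- The signal-learning hitting time `T₀`. -/
def T0 (C0 : ℝ) : ℕ :=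
  sInf {t : ℕ | ∃ r, C0 / (S.alpha * (S.m : ℝ) ^ ((1 : ℝ) / 3)) < S.wsig t r}

/-- Maximum of the noise coefficients over unlearnable noise patches. -/
def rhoMaxSU (t : ℕ) : ℝ :=
  sSup {z : ℝ | ∃ r : Fin S.m, ∃ k ∈ S.SU, ∃ q, q ≠ S.sig k ∧ z = S.rho k q r t}

/-- Shifted noise coefficients `ρ̂_{i,j,r}^{(t)}`. -/
def rhoHat (i : Fin S.N) (j : Fin S.P) (r : Fin S.m) (t : ℕ) : ℝ :=
  S.rho i j r t + S.y i * dot (S.w 0 r) (S.x i j) / sqnorm (S.x i j)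

/-- Maximum shifted noise coefficient over unlearnable noise patches. -/
def rhoHatMax (t : ℕ) : ℝ :=
  sSup {z : ℝ | ∃ r : Fin S.m, ∃ k ∈ S.SU, ∃ q, q ≠ S.sig k ∧ z = S.rhoHat k q r t}

/-- The noise-memorization hitting time `T₁`. -/
def T1 (C1 : ℝ) : ℕ :=
  sInf {t : ℕ | C1 / (((S.m : ℝ) * S.P) ^ ((1 : ℝ) / 3) * S.sigman ^ 2 * S.d) < S.rhoHatMax t}

/-- The Good-Teacher horizon `T_max`. -/
def Tmax : ℝ :=
  S.N / (1000 * S.eta * S.m * S.P * S.sigma0 ^ 4 * S.sigman ^ 6 * (S.d : ℝ) ^ 3 *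
    Real.log ((16 : ℝ) * S.N * S.m * S.P / S.delta) ^ 2)

end Setting

theorem phi_sub_phi_neg (z : ℝ) : phi z - phi (-z) = z ^ 3 := by
  unfold phi
  rcases le_total 0 z with h | h
  · rw [max_eq_right h, max_eq_left (by linarith)]; ring
  · rw [max_eq_left h, max_eq_right (by linarith)]; ring

theorem psi_pos (z : ℝ) : 0 < psi z := by
  unfold psi; positivity

theorem psi_le_one (z : ℝ) : psi z ≤ 1 := by
  unfold psi
  rw [div_le_one (by positivity)]
  linarith [Real.exp_pos z]

theorem psi_anti {a b : ℝ} (h : a ≤ b) : psi b ≤ psi a := by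
  unfold psi
  have := Real.exp_le_exp.2 h
  gcongr

theorem psi_le_exp_neg (z : ℝ) : psi z ≤ Real.exp (-z) := by
  unfold psi
  rw [Real.exp_neg, ← one_div]
  exact one_div_le_one_div_of_le (Real.exp_pos z) (by linarith)

section Dot

variable {d : ℕ} (a b c : Fin d → ℝ)

theorem dot_comm : dot a b = dot b a := dotProduct_comm a b

theorem add_dot : dot (a + b) c = dot a c + dot b c := add_dotProduct a b c

theorem smul_dot (z : ℝ) : dot (z • a) b = z * dot a b := smul_dotProduct z a b

theorem dot_smul (z : ℝ) : dot a (z • b) = z * dot a b := dotProduct_smul z a b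

theorem sum_dot {ι : Type*} (s : Finset ι) (f : ι → Fin d → ℝ) :
    dot (∑ i ∈ s, f i) c = ∑ i ∈ s, dot (f i) c := sum_dotProduct s f c

theorem dot_e1 (hd : 0 < d) : dot a (e1 d hd) = a ⟨0, hd⟩ := by
  simp [dot, e1]

end Dot

theorem netOut_eq {m P d : ℕ} (w : Fin m → Fin d → ℝ) (X : Fin P → Fin d → ℝ) :
    netOut w X = ∑ r, ∑ p, dot (w r) (X p) ^ 3 := by
  simp only [netOut, phi_sub_phi_neg]

namespace Setting

variable (S : Setting)

/-- Indices of the noise patches of sample `i`. -/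
def noise (i : Fin S.N) : Finset (Fin S.P) := univ.erase (S.sig i)

variable {S}

theorem mem_noise {i : Fin S.N} {j : Fin S.P} : j ∈ S.noise i ↔ j ≠ S.sig i := by
  simp [noise]

theorem card_noise_le (i : Fin S.N) : ((S.noise i).card : ℝ) ≤ S.P := by
  have : (S.noise i).card ≤ S.P := by
    simpa using Finset.card_le_univ (S.noise i)
  exact_mod_cast this

theorem y_sq (i : Fin S.N) : S.y i * S.y i = 1 := by
  rcases S.hy i with h | h <;> rw [h] <;> norm_num

theorem y_cube_mul (i : Fin S.N) (z : ℝ) : S.y i * z ^ 3 = (S.y i * z) ^ 3 := by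
  rcases S.hy i with h | h <;> rw [h] <;> ring

theorem abs_y (i : Fin S.N) : |S.y i| = 1 := by
  rcases S.hy i with h | h <;> rw [h] <;> norm_num

theorem sum_patches (i : Fin S.N) (f : Fin S.P → ℝ) :
    ∑ p, f p = f (S.sig i) + ∑ p ∈ S.noise i, f p :=
  (Finset.add_sum_erase univ f (mem_univ _)).symm

theorem mem_SL_or_SU (i : Fin S.N) : i ∈ S.SL ∨ i ∈ S.SU := by
  have : i ∈ S.SL ∪ S.SU := by rw [S.hunion]; exact mem_univ i
  simpa using this

theorem dot_wt_e1 (t : ℕ) (r : Fin S.m) : dot (S.w t r) (e1 S.d S.hd) = S.wsig t r :=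
  dot_e1 _ _

theorem exists_xadv_SL (t : ℕ) {i : Fin S.N} (hi : i ∈ S.SL) :
    ∃ a : ℝ, S.alpha - S.eps ≤ a ∧ a ≤ S.alpha ∧
      S.xadv t i (S.sig i) = (a * S.y i) • e1 S.d S.hd := by
  obtain ⟨c, hc⟩ := S.hadvspan t i
  have hx : S.xadv t i (S.sig i) = ((1 + c) * S.alpha * S.y i) • e1 S.d S.hd := by
    rw [sub_eq_iff_eq_add] at hc
    rw [hc, S.hsigL i hi, smul_smul, ← add_smul]
    congr 1; ring
  have h := S.hadvlearn t i hi
  have hdot : S.y i * dot (S.xadv t i (S.sig i)) (e1 S.d S.hd) = (1 + c) * S.alpha := by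
    rw [hx, smul_dot, dot_e1]
    have := S.y_sq i
    simp only [e1, if_true]
    linear_combination ((1 + c) * S.alpha) * this
  rw [hdot] at h
  exact ⟨(1 + c) * S.alpha, h.1, h.2, hx⟩

theorem exists_xadv_SU (t : ℕ) {i : Fin S.N} (hi : i ∈ S.SU) :
    ∃ a : ℝ, S.xadv t i (S.sig i) = a • eLast S.d S.hd := by
  obtain ⟨c, hc⟩ := S.hadvspan t i
  rw [sub_eq_iff_eq_add, S.hsigU i hi, smul_smul, ← add_smul] at hc
  exact ⟨_, hc⟩

theorem dot_xadv_sig_noise (t : ℕ) (k i : Fin S.N) {j : Fin S.P} (hj : j ≠ S.sig i) :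
    dot (S.xadv t k (S.sig k)) (S.x i j) = 0 := by
  rcases S.mem_SL_or_SU k with hk | hk
  · obtain ⟨a, -, -, ha⟩ := exists_xadv_SL t hk
    rw [ha, smul_dot, dot_comm, S.hnoiseU i j hj, mul_zero]
  · obtain ⟨a, ha⟩ := exists_xadv_SU t hk
    rw [ha, smul_dot, dot_comm, S.hnoiseV i j hj, mul_zero]

/-- Sum of the cubed label-aligned noise correlations of sample `i`. -/
def noiseMarg (S : Setting) (t : ℕ) (i : Fin S.N) : ℝ :=
  ∑ r, ∑ q ∈ S.noise i, (S.y i * dot (S.w t r) (S.x i q)) ^ 3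

theorem marg_eq (t : ℕ) (i : Fin S.N) :
    S.marg t i = ∑ r, (S.y i * dot (S.w t r) (S.xadv t i (S.sig i))) ^ 3 + S.noiseMarg t i := by
  rw [marg, netOut_eq, noiseMarg, ← Finset.sum_add_distrib, Finset.mul_sum]
  refine Finset.sum_congr rfl fun r _ => ?_
  rw [sum_patches i, mul_add, y_cube_mul, Finset.mul_sum]
  congr 1
  refine Finset.sum_congr rfl fun q hq => ?_
  rw [y_cube_mul, S.hadvnoise t i q (mem_noise.1 hq)]

theorem marg_SU (t : ℕ) {i : Fin S.N} (hi : i ∈ S.SU) : S.marg t i = S.noiseMarg t i := by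
  obtain ⟨a, ha⟩ := exists_xadv_SU t hi
  rw [marg_eq, ha]
  simp [dot_smul, S.hwperp]

theorem marg_SL (t : ℕ) {i : Fin S.N} (hi : i ∈ S.SL) :
    ∃ a : ℝ, S.alpha - S.eps ≤ a ∧ a ≤ S.alpha ∧
      S.marg t i = ∑ r, (a * S.wsig t r) ^ 3 + S.noiseMarg t i := by
  obtain ⟨a, h1, h2, ha⟩ := exists_xadv_SL t hi
  refine ⟨a, h1, h2, ?_⟩
  rw [marg_eq, ha]
  congr 1
  refine Finset.sum_congr rfl fun r _ => ?_
  rw [dot_smul, dot_wt_e1]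
  congr 1
  linear_combination (a * S.wsig t r) * S.y_sq i

theorem noiseMarg_le {t : ℕ} {i : Fin S.N} {B : ℝ} (hB : 0 ≤ B)
    (h : ∀ r, ∀ q ∈ S.noise i, S.y i * dot (S.w t r) (S.x i q) ≤ B) :
    S.noiseMarg t i ≤ S.m * S.P * B ^ 3 := by
  have h3 : ∀ r, ∀ q ∈ S.noise i, (S.y i * dot (S.w t r) (S.x i q)) ^ 3 ≤ B ^ 3 := fun r q hq =>
    (Odd.strictMono_pow (by decide : Odd 3)).monotone (h r q hq)
  calc S.noiseMarg t i ≤ ∑ _r : Fin S.m, (S.P : ℝ) * B ^ 3 := by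
        refine Finset.sum_le_sum fun r _ => ?_
        refine (Finset.sum_le_card_nsmul _ _ _ (h3 r)).trans ?_
        rw [nsmul_eq_mul]
        exact mul_le_mul_of_nonneg_right (card_noise_le i) (by positivity)
    _ = S.m * S.P * B ^ 3 := by simp [mul_assoc]

theorem le_noiseMarg {t : ℕ} {i : Fin S.N} {B : ℝ} (hB : 0 ≤ B)
    (h : ∀ r, ∀ q ∈ S.noise i, -B ≤ S.y i * dot (S.w t r) (S.x i q)) :
    -(S.m * S.P * B ^ 3) ≤ S.noiseMarg t i := by
  have h3 : ∀ r, ∀ q ∈ S.noise i, -(B ^ 3) ≤ (S.y i * dot (S.w t r) (S.x i q)) ^ 3 :=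
    fun r q hq => by
      rw [← Odd.neg_pow (by decide : Odd 3)]
      exact (Odd.strictMono_pow (by decide : Odd 3)).monotone (h r q hq)
  calc -(S.m * S.P * B ^ 3) = ∑ _r : Fin S.m, -((S.P : ℝ) * B ^ 3) := by simp [mul_assoc]
    _ ≤ S.noiseMarg t i := by
        refine Finset.sum_le_sum fun r _ => ?_
        refine le_trans ?_ (Finset.card_nsmul_le_sum _ _ _ (h3 r))
        rw [nsmul_eq_mul, mul_neg]
        exact neg_le_neg (mul_le_mul_of_nonneg_right (card_noise_le i) (by positivity))

/-- Total gradient mass that the learnable samples contribute at iteration `t`. -/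
def gradMass (S : Setting) (t : ℕ) : ℝ :=
  (3 * S.eta / S.N) * ∑ k ∈ S.SL, psi (S.marg t k)

theorem rate_nonneg (S : Setting) : 0 ≤ 3 * S.eta / S.N := by
  have := S.heta
  positivity

theorem gradMass_nonneg (t : ℕ) : 0 ≤ S.gradMass t :=
  mul_nonneg S.rate_nonneg (Finset.sum_nonneg fun _ _ => (psi_pos _).le)

theorem rate_mul_psi_le_gradMass (t : ℕ) {k : Fin S.N} (hk : k ∈ S.SL) :
    3 * S.eta / S.N * psi (S.marg t k) ≤ S.gradMass t :=
  mul_le_mul_of_nonneg_left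
    (Finset.single_le_sum (f := fun k => psi (S.marg t k)) (fun _ _ => (psi_pos _).le) hk)
    S.rate_nonneg

theorem eLast_zero (hd2 : 2 ≤ S.d) : eLast S.d S.hd ⟨0, S.hd⟩ = 0 := by
  have : ¬ (0 = S.d - 1) := by omega
  simp [eLast, this]

theorem wsig_succ (hdyn : S.ATDyn) (hd2 : 2 ≤ S.d) (t : ℕ) (r : Fin S.m) :
    ∃ a : Fin S.N → ℝ, (∀ k ∈ S.SL, S.alpha - S.eps ≤ a k ∧ a k ≤ S.alpha) ∧
      S.wsig (t + 1) r = S.wsig t r +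
        (3 * S.eta / S.N) * ∑ k ∈ S.SL, psi (S.marg t k) * (a k ^ 3 * S.wsig t r ^ 2) := by
  choose! a ha1 ha2 ha using fun k (hk : k ∈ S.SL) => exists_xadv_SL t hk
  refine ⟨a, fun k hk => ⟨ha1 k hk, ha2 k hk⟩, ?_⟩
  have hpatch : ∀ k : Fin S.N, psi (S.marg t k) * S.y k *
      ∑ p, dot (S.w t r) (S.xadv t k p) ^ 2 * S.xadv t k p ⟨0, S.hd⟩ =
      psi (S.marg t k) * S.y k *
        (dot (S.w t r) (S.xadv t k (S.sig k)) ^ 2 * S.xadv t k (S.sig k) ⟨0, S.hd⟩) := by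
    intro k
    rw [sum_patches k, Finset.sum_eq_zero, add_zero]
    intro q hq
    have := S.hnoiseU k q (mem_noise.1 hq)
    rw [dot_e1] at this
    rw [S.hadvnoise t k q (mem_noise.1 hq), this, mul_zero]
  have hstep : S.wsig (t + 1) r = S.wsig t r + (3 * S.eta / S.N) *
      ∑ k, psi (S.marg t k) * S.y k *
        ∑ p, dot (S.w t r) (S.xadv t k p) ^ 2 * S.xadv t k p ⟨0, S.hd⟩ := by
    have := congrFun (hdyn t r) ⟨0, S.hd⟩
    simpa [wsig, Finset.sum_apply, smul_eq_mul] using this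
  rw [hstep]
  congr 2
  rw [← S.hunion, Finset.sum_union S.hdisj, Finset.sum_eq_zero (s := S.SU), add_zero]
  · refine Finset.sum_congr rfl fun k hk => ?_
    rw [hpatch, ha k hk, dot_smul, dot_wt_e1]
    have hy := S.y_sq k
    simp only [e1, Pi.smul_apply, if_true, smul_eq_mul]
    have hy4 : S.y k * S.y k * (S.y k * S.y k) = 1 := by rw [hy]; norm_num
    linear_combination (psi (S.marg t k) * (a k ^ 3 * S.wsig t r ^ 2)) * hy4
  · intro k hk
    obtain ⟨b, hb⟩ := exists_xadv_SU t hk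
    rw [hpatch, hb]
    simp [eLast_zero hd2]

theorem wsig_succ_bounds (hdyn : S.ATDyn) (hd2 : 2 ≤ S.d) (heps : S.alpha / 2 ≤ S.alpha - S.eps)
    (t : ℕ) (r : Fin S.m) :
    S.alpha ^ 3 / 8 * S.gradMass t * S.wsig t r ^ 2 ≤ S.wsig (t + 1) r - S.wsig t r ∧
      S.wsig (t + 1) r - S.wsig t r ≤ S.alpha ^ 3 * S.gradMass t * S.wsig t r ^ 2 := by
  obtain ⟨a, ha, h⟩ := wsig_succ hdyn hd2 t r
  have hα := S.halpha
  have hr := S.rate_nonneg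
  rw [h, gradMass]
  have e : ∀ c : ℝ, c * (3 * S.eta / S.N * ∑ k ∈ S.SL, psi (S.marg t k)) * S.wsig t r ^ 2 =
      (3 * S.eta / S.N) * ∑ k ∈ S.SL, psi (S.marg t k) * (c * S.wsig t r ^ 2) := by
    intro c; rw [← Finset.sum_mul]; ring
  rw [e, e, add_sub_cancel_left]
  constructor
  · refine mul_le_mul_of_nonneg_left (Finset.sum_le_sum fun k hk => ?_) hr
    have h1 : (S.alpha / 2) ^ 3 ≤ a k ^ 3 :=
      pow_le_pow_left₀ (by linarith) (heps.trans (ha k hk).1) 3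
    have h2 : S.alpha ^ 3 / 8 ≤ a k ^ 3 := by
      rwa [div_pow, show (2 : ℝ) ^ 3 = 8 by norm_num] at h1
    have := (psi_pos (S.marg t k)).le
    gcongr
  · refine mul_le_mul_of_nonneg_left (Finset.sum_le_sum fun k hk => ?_) hr
    have h1 : a k ^ 3 ≤ S.alpha ^ 3 :=
      pow_le_pow_left₀ (by linarith [(ha k hk).1]) (ha k hk).2 3
    have := (psi_pos (S.marg t k)).le
    gcongr

theorem wsig_mono (hdyn : S.ATDyn) (hd2 : 2 ≤ S.d) (heps : S.alpha / 2 ≤ S.alpha - S.eps)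
    (r : Fin S.m) : Monotone fun t => S.wsig t r := by
  refine monotone_nat_of_le_succ fun t => ?_
  have h := (wsig_succ_bounds hdyn hd2 heps t r).1
  have := S.halpha
  have := S.gradMass_nonneg t
  have : 0 ≤ S.alpha ^ 3 / 8 * S.gradMass t * S.wsig t r ^ 2 := by positivity
  linarith

theorem rho_succ (i : Fin S.N) (j : Fin S.P) (r : Fin S.m) (t : ℕ) :
    S.rho i j r (t + 1) = S.rho i j r t +
      (3 * S.eta / S.N) * psi (S.marg t i) * (dot (S.w t r) (S.x i j)) ^ 2 := rfl

theorem rho_mono (i : Fin S.N) (j : Fin S.P) (r : Fin S.m) : Monotone (S.rho i j r) := by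
  refine monotone_nat_of_le_succ fun t => ?_
  rw [rho_succ]
  have := S.rate_nonneg
  have := (psi_pos (S.marg t i)).le
  have : 0 ≤ 3 * S.eta / S.N * psi (S.marg t i) * dot (S.w t r) (S.x i j) ^ 2 := by positivity
  linarith

theorem rho_nonneg (i : Fin S.N) (j : Fin S.P) (r : Fin S.m) (t : ℕ) : 0 ≤ S.rho i j r t :=
  S.rho_mono i j r (Nat.zero_le t)

/-- Decomposition of the noise correlations along the noise patches. -/
theorem dot_w_noise (hdyn : S.ATDyn) (t : ℕ) (r : Fin S.m) (i : Fin S.N) {j : Fin S.P}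
    (hj : j ≠ S.sig i) :
    dot (S.w t r) (S.x i j) = dot (S.w 0 r) (S.x i j) +
      ∑ k, ∑ q ∈ S.noise k, S.y k * S.rho k q r t * dot (S.x k q) (S.x i j) := by
  induction t with
  | zero => simp [rho]
  | succ t ih =>
    rw [hdyn t r, add_dot, ih, smul_dot, sum_dot, add_assoc, Finset.mul_sum,
      ← Finset.sum_add_distrib]
    congr 1
    refine Finset.sum_congr rfl fun k _ => ?_
    rw [smul_dot, sum_dot, sum_patches k, smul_dot, dot_xadv_sig_noise t k i hj, mul_zero, zero_add,
      Finset.mul_sum, Finset.mul_sum, ← Finset.sum_add_distrib]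
    refine Finset.sum_congr rfl fun q hq => ?_
    rw [smul_dot, S.hadvnoise t k q (mem_noise.1 hq), rho_succ]
    ring

/-- Total noise coefficient of neuron `r` over all noise patches. -/
def rhoSum (S : Setting) (t : ℕ) (r : Fin S.m) : ℝ := ∑ k, ∑ q ∈ S.noise k, S.rho k q r t

theorem sum_noise_le {s : Finset (Fin S.N)} {f : Fin S.N → Fin S.P → ℝ} {R : ℝ} (hR : 0 ≤ R)
    (h : ∀ k ∈ s, ∀ q ∈ S.noise k, f k q ≤ R) :
    ∑ k ∈ s, ∑ q ∈ S.noise k, f k q ≤ s.card * (S.P * R) := by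
  rw [← nsmul_eq_mul]
  refine Finset.sum_le_card_nsmul _ _ _ fun k hk => ?_
  refine (Finset.sum_le_card_nsmul _ _ _ (h k hk)).trans ?_
  rw [nsmul_eq_mul]
  exact mul_le_mul_of_nonneg_right (card_noise_le k) hR

theorem card_SL_le (S : Setting) : (S.SL.card : ℝ) ≤ S.N := by
  have : S.SL.card ≤ S.N := by simpa using Finset.card_le_univ S.SL
  exact_mod_cast this

theorem rhoSum_le {t : ℕ} {r : Fin S.m} {R RU : ℝ} (hR : 0 ≤ R) (hRU : 0 ≤ RU)
    (hL : ∀ k ∈ S.SL, ∀ q ∈ S.noise k, S.rho k q r t ≤ R)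
    (hU : ∀ k ∈ S.SU, ∀ q ∈ S.noise k, S.rho k q r t ≤ RU) :
    S.rhoSum t r ≤ S.N * (S.P * R) + S.SU.card * (S.P * RU) := by
  rw [rhoSum, ← S.hunion, Finset.sum_union S.hdisj]
  have h1 := sum_noise_le hR hL
  have h2 := sum_noise_le hRU hU
  have h3 : (S.SL.card : ℝ) * (S.P * R) ≤ S.N * (S.P * R) :=
    mul_le_mul_of_nonneg_right S.card_SL_le (by positivity)
  linarith

/-- A noise correlation is its initial value plus its own coefficient, up to cross terms. -/
theorem abs_dot_w_noise_sub_le (hdyn : S.ATDyn) {kap : ℝ} (hkap : 0 ≤ kap)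
    (hcross : ∀ i k j q, j ≠ S.sig i → q ≠ S.sig k → ((i, j) : Fin S.N × Fin S.P) ≠ (k, q) →
      |dot (S.x i j) (S.x k q)| ≤ kap)
    (t : ℕ) (r : Fin S.m) (i : Fin S.N) {j : Fin S.P} (hj : j ≠ S.sig i) :
    |dot (S.w t r) (S.x i j) -
        (dot (S.w 0 r) (S.x i j) + S.y i * S.rho i j r t * sqnorm (S.x i j))| ≤
      kap * S.rhoSum t r := by
  have hself : ∑ k, ∑ q ∈ S.noise k,
      (if ((k, q) : Fin S.N × Fin S.P) = (i, j) then
        S.y i * S.rho i j r t * sqnorm (S.x i j) else 0) =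
      S.y i * S.rho i j r t * sqnorm (S.x i j) := by
    rw [Finset.sum_eq_single i, Finset.sum_eq_single j]
    · simp
    · intro q _ hq; simp [hq]
    · intro h; exact absurd (mem_noise.2 hj) h
    · intro k _ hk; simp [hk]
    · intro h; exact absurd (mem_univ i) h
  rw [dot_w_noise hdyn t r i hj, add_sub_add_left_eq_sub, ← hself, ← Finset.sum_sub_distrib,
    rhoSum, Finset.mul_sum]
  refine (Finset.abs_sum_le_sum_abs _ _).trans (Finset.sum_le_sum fun k _ => ?_)
  rw [← Finset.sum_sub_distrib, Finset.mul_sum]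
  refine (Finset.abs_sum_le_sum_abs _ _).trans (Finset.sum_le_sum fun q hq => ?_)
  have hρ := S.rho_nonneg k q r t
  by_cases h : ((k, q) : Fin S.N × Fin S.P) = (i, j)
  · obtain ⟨rfl, rfl⟩ := Prod.mk.inj h
    simp only [if_true, sqnorm, sub_self, abs_zero]
    positivity
  · rw [if_neg h, sub_zero, abs_mul, abs_mul, abs_y, one_mul, abs_of_nonneg hρ, mul_comm]
    exact mul_le_mul_of_nonneg_right (hcross k i q j (mem_noise.1 hq) hj h) hρ

/-- Scale relations between the parameters under which the noise correlations of the learnable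
samples stay bounded by `B`: noise patches have squared norm of order `V` and cross correlations at
most `kap`, initial noise correlations are at most `b`, initial signal coordinates at least
`-zeta`. -/
structure Scales (S : Setting) (V b kap B zeta : ℝ) : Prop where
  V_pos : 0 < V
  b_pos : 0 < b
  kap_nonneg : 0 ≤ kap
  zeta_nonneg : 0 ≤ zeta
  two_le_d : 2 ≤ S.d
  half_alpha_le : S.alpha / 2 ≤ S.alpha - S.eps
  sqnorm_le : ∀ i j, j ≠ S.sig i → sqnorm (S.x i j) ≤ 3 / 2 * V
  cross_le : ∀ i k j q, j ≠ S.sig i → q ≠ S.sig k → ((i, j) : Fin S.N × Fin S.P) ≠ (k, q) →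
    |dot (S.x i j) (S.x k q)| ≤ kap
  init_noise_le : ∀ r i j, j ≠ S.sig i → |dot (S.w 0 r) (S.x i j)| ≤ b
  le_init_signal : ∀ r, -zeta ≤ S.wsig 0 r
  exists_init_signal : ∃ r, S.sigma0 / 2 ≤ S.wsig 0 r
  zeta_small : S.m * (S.alpha * zeta) ^ 3 ≤ 1
  kap_small : S.N * S.P * kap ≤ V
  b_small : 3 * b ≤ B
  B_small : S.m * S.P * B ^ 3 ≤ 1
  step_small : 48 * S.eta * S.alpha ^ 2 ≤ 1
  early : 5760 * b * V ≤ S.sigma0 * S.alpha ^ 3 * S.SL.card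
  late : 160 * B * S.m * V ≤ S.alpha ^ 2

/-- The noise correlations of all learnable samples are at most `B` at iteration `t`. -/
def NoiseSmall (S : Setting) (B : ℝ) (t : ℕ) : Prop :=
  ∀ k ∈ S.SL, ∀ q ∈ S.noise k, ∀ r, |dot (S.w t r) (S.x k q)| ≤ B

/-- The signal coordinates have not yet reached the scale `1 / (α m)` before iteration `t`. -/
def Early (S : Setting) (t : ℕ) : Prop :=
  ∀ s < t, ∀ r, S.alpha * S.wsig s r ≤ 1 / S.m

theorem mul_exp_neg_cube_le (x : ℝ) : x * Real.exp (-(x ^ 3 / 8)) ≤ 2 := by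
  rcases le_total x 0 with hx | hx
  · have := mul_nonneg (neg_nonneg.2 hx) (Real.exp_pos (-(x ^ 3 / 8))).le
    linarith
  · rw [Real.exp_neg, ← div_eq_mul_inv, div_le_iff₀ (Real.exp_pos _)]
    have h := Real.add_one_le_exp (x ^ 3 / 8)
    have : 0 ≤ (x + 2) * (x - 1) ^ 2 := by positivity
    nlinarith

theorem abs_y_mul (i : Fin S.N) (z : ℝ) : |S.y i * z| = |z| := by
  rw [abs_mul, abs_y, one_mul]

theorem sqnorm_nonneg {d : ℕ} (a : Fin d → ℝ) : 0 ≤ sqnorm a := by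
  unfold sqnorm dot
  exact Finset.sum_nonneg fun k _ => mul_self_nonneg (a k)

theorem rho_add_le {B : ℝ} {k : Fin S.N} (hk : k ∈ S.SL) {q : Fin S.P}
    (r : Fin S.m) (a n : ℕ) (hN : ∀ s < n, |dot (S.w (a + s) r) (S.x k q)| ≤ B) :
    S.rho k q r (a + n) ≤ S.rho k q r a + B ^ 2 * ∑ s ∈ range n, S.gradMass (a + s) := by
  induction n with
  | zero => simp
  | succ n ih =>
    have h1 := ih fun s hs => hN s (hs.trans (Nat.lt_succ_self n))
    have h2 := hN n (Nat.lt_succ_self n)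
    rw [Finset.sum_range_succ, ← add_assoc, rho_succ, mul_add]
    have h3 : dot (S.w (a + n) r) (S.x k q) ^ 2 ≤ B ^ 2 := sq_le_sq' (abs_le.1 h2).1 (abs_le.1 h2).2
    have h4 := mul_le_mul (rate_mul_psi_le_gradMass (a + n) hk) h3 (sq_nonneg _)
      (S.gradMass_nonneg _)
    linarith

namespace Scales

variable {V b kap B zeta : ℝ}

theorem B_pos (h : S.Scales V b kap B zeta) : 0 < B := by linarith [h.b_small, h.b_pos]

theorem abs_dot_le (h : S.Scales V b kap B zeta) (hdyn : S.ATDyn) (t : ℕ) (r : Fin S.m) (i : Fin S.N) {j : Fin S.P}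
    (hj : j ≠ S.sig i) :
    |dot (S.w t r) (S.x i j)| ≤ b + 3 / 2 * V * S.rho i j r t + kap * S.rhoSum t r := by
  have h1 := abs_dot_w_noise_sub_le hdyn h.kap_nonneg h.cross_le t r i hj
  have h2 := h.init_noise_le r i j hj
  have h3 := h.sqnorm_le i j hj
  have hρ := S.rho_nonneg i j r t
  have h0 : 0 ≤ sqnorm (S.x i j) := sqnorm_nonneg _
  have h4 : |S.y i * S.rho i j r t * sqnorm (S.x i j)| ≤ 3 / 2 * V * S.rho i j r t := by
    rw [mul_assoc, abs_y_mul, abs_of_nonneg (mul_nonneg hρ h0), mul_comm]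
    exact mul_le_mul_of_nonneg_right h3 hρ
  rw [abs_le] at *
  constructor <;> linarith [h1.1, h1.2, h2.1, h2.2, h4.1, h4.2]

theorem le_sum_signal (h : S.Scales V b kap B zeta) (hdyn : S.ATDyn) (t : ℕ) {a : ℝ} (ha0 : S.alpha / 2 ≤ a)
    (ha : a ≤ S.alpha) (r : Fin S.m) (hr : 0 ≤ S.wsig t r) :
    (S.alpha * S.wsig t r) ^ 3 / 8 - 1 ≤ ∑ r, (a * S.wsig t r) ^ 3 := by
  have hα := S.halpha
  have hz := h.zeta_nonneg
  have hneg : ∀ r, -((S.alpha * zeta) ^ 3) ≤ (a * S.wsig t r) ^ 3 := by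
    intro r
    have h1 : -zeta ≤ S.wsig t r := (h.le_init_signal r).trans
      (wsig_mono hdyn h.two_le_d h.half_alpha_le r (Nat.zero_le t))
    rw [← Odd.neg_pow (by decide : Odd 3)]
    refine (Odd.strictMono_pow (by decide : Odd 3)).monotone ?_
    nlinarith
  rw [← Finset.add_sum_erase _ _ (mem_univ r)]
  have h1 : ((univ.erase r).card : ℝ) * -((S.alpha * zeta) ^ 3) ≤
      ∑ r ∈ univ.erase r, (a * S.wsig t r) ^ 3 := by
    rw [← nsmul_eq_mul]
    exact Finset.card_nsmul_le_sum _ _ _ fun r _ => hneg r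
  have h2 : ((univ.erase r).card : ℝ) ≤ S.m := by
    have : (univ.erase r).card ≤ S.m := by simp
    exact_mod_cast this
  have h3 : ((univ.erase r).card : ℝ) * (S.alpha * zeta) ^ 3 ≤ 1 :=
    (mul_le_mul_of_nonneg_right h2 (by positivity)).trans h.zeta_small
  have h4 : (S.alpha / 2 * S.wsig t r) ^ 3 ≤ (a * S.wsig t r) ^ 3 :=
    pow_le_pow_left₀ (by positivity) (mul_le_mul_of_nonneg_right ha0 hr) 3
  have h5 : (S.alpha / 2 * S.wsig t r) ^ 3 = (S.alpha * S.wsig t r) ^ 3 / 8 := by ring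
  linarith

/-- While the learnable noise is small, a positive signal coordinate at most doubles per step. -/
theorem wsig_succ_le (h : S.Scales V b kap B zeta) (hdyn : S.ATDyn) {t : ℕ} (hN : S.NoiseSmall B t) {r : Fin S.m}
    (hr : 0 < S.wsig t r) : S.wsig (t + 1) r ≤ 2 * S.wsig t r := by
  have hα := S.halpha
  have hη := S.heta
  have hNpos : (0 : ℝ) < S.N := by exact_mod_cast S.hN
  set X := S.alpha * S.wsig t r with hX
  have hpsi : ∀ k ∈ S.SL, psi (S.marg t k) ≤ 8 * Real.exp (-(X ^ 3 / 8)) := by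
    intro k hk
    obtain ⟨a, ha1, ha2, ha⟩ := marg_SL t hk
    have h1 := h.le_sum_signal hdyn t (h.half_alpha_le.trans ha1) ha2 r hr.le
    have h2 : -(S.m * S.P * B ^ 3) ≤ S.noiseMarg t k := le_noiseMarg h.B_pos.le fun r q hq => by
      have := hN k hk q hq r
      rw [← abs_y_mul k] at this
      exact (abs_le.1 this).1
    have h3 := h.B_small
    refine (psi_le_exp_neg _).trans ?_
    have h4 : Real.exp (-(S.marg t k)) ≤ Real.exp (2 + -(X ^ 3 / 8)) :=
      Real.exp_le_exp.2 (by linarith)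
    refine h4.trans ?_
    rw [Real.exp_add]
    refine mul_le_mul_of_nonneg_right ?_ (Real.exp_pos _).le
    have h5 := Real.exp_one_lt_d9
    have h6 : Real.exp 2 = Real.exp 1 * Real.exp 1 := by rw [← Real.exp_add]; norm_num
    rw [h6]
    nlinarith [Real.exp_pos 1]
  have hmass : S.gradMass t ≤ 24 * S.eta * Real.exp (-(X ^ 3 / 8)) := by
    have h1 := Finset.sum_le_card_nsmul _ _ _ hpsi
    rw [nsmul_eq_mul] at h1
    have h2 : ∑ k ∈ S.SL, psi (S.marg t k) ≤ S.N * (8 * Real.exp (-(X ^ 3 / 8))) :=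
      h1.trans (mul_le_mul_of_nonneg_right S.card_SL_le (by positivity))
    calc S.gradMass t ≤ 3 * S.eta / S.N * (S.N * (8 * Real.exp (-(X ^ 3 / 8)))) :=
          mul_le_mul_of_nonneg_left h2 S.rate_nonneg
      _ = _ := by field_simp; ring
  have h1 := (wsig_succ_bounds hdyn h.two_le_d h.half_alpha_le t r).2
  have h2 : S.alpha ^ 3 * S.gradMass t * S.wsig t r ^ 2 ≤
      S.alpha ^ 3 * (24 * S.eta * Real.exp (-(X ^ 3 / 8))) * S.wsig t r ^ 2 := by gcongr
  have h3 : S.alpha ^ 3 * (24 * S.eta * Real.exp (-(X ^ 3 / 8))) * S.wsig t r ^ 2 =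
      24 * S.eta * S.alpha ^ 2 * S.wsig t r * (X * Real.exp (-(X ^ 3 / 8))) := by
    rw [hX]; ring
  have h4 : 24 * S.eta * S.alpha ^ 2 * S.wsig t r * (X * Real.exp (-(X ^ 3 / 8))) ≤
      24 * S.eta * S.alpha ^ 2 * S.wsig t r * 2 :=
    mul_le_mul_of_nonneg_left (mul_exp_neg_cube_le X) (by positivity)
  have h5 : 48 * S.eta * S.alpha ^ 2 * S.wsig t r ≤ 1 * S.wsig t r :=
    mul_le_mul_of_nonneg_right h.step_small hr.le
  linarith

/-- Time-uniform bound on the learnable gradient mass, by telescoping the reciprocal of a signal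
coordinate. -/
theorem sum_gradMass_le (h : S.Scales V b kap B zeta) (hdyn : S.ATDyn) {a : ℕ} {r : Fin S.m} (hr : 0 < S.wsig a r) (n : ℕ)
    (hN : ∀ s < n, S.NoiseSmall B (a + s)) :
    ∑ s ∈ range n, S.gradMass (a + s) ≤ 16 / (S.alpha ^ 3 * S.wsig a r) := by
  have hα := S.halpha
  have hmono := wsig_mono hdyn h.two_le_d h.half_alpha_le r
  have hpos : ∀ s, 0 < S.wsig (a + s) r := fun s => hr.trans_le (hmono (Nat.le_add_right a s))
  have key : ∀ n, (∀ s < n, S.NoiseSmall B (a + s)) → ∑ s ∈ range n, S.gradMass (a + s) ≤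
      16 / S.alpha ^ 3 * (1 / S.wsig a r - 1 / S.wsig (a + n) r) := by
    intro n
    induction n with
    | zero => simp
    | succ n ih =>
      intro hN
      rw [Finset.sum_range_succ]
      have h1 := ih fun s hs => hN s (hs.trans (Nat.lt_succ_self n))
      have h2 := h.wsig_succ_le hdyn (hN n (Nat.lt_succ_self n)) (hpos n)
      have h3 := (wsig_succ_bounds hdyn h.two_le_d h.half_alpha_le (a + n) r).1
      have p1 := hpos n
      have p2 := hpos (n + 1)
      rw [← add_assoc] at p2 ⊢
      set u := S.wsig (a + n) r
      set v := S.wsig (a + n + 1) r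
      set g := S.gradMass (a + n)
      have h4 : g ≤ 16 / S.alpha ^ 3 * (1 / u - 1 / v) := by
        have e : 16 / S.alpha ^ 3 * (1 / u - 1 / v) = 16 * (v - u) / (S.alpha ^ 3 * u * v) := by
          field_simp
        rw [e, le_div_iff₀ (by positivity)]
        have hg : 0 ≤ g := S.gradMass_nonneg _
        have h5 : g * (S.alpha ^ 3 * u * v) ≤ g * (S.alpha ^ 3 * u * (2 * u)) := by gcongr
        nlinarith
      have e : 16 / S.alpha ^ 3 * (1 / S.wsig a r - 1 / v) =
          16 / S.alpha ^ 3 * (1 / S.wsig a r - 1 / u) + 16 / S.alpha ^ 3 * (1 / u - 1 / v) := by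
        ring
      linarith
  refine (key n hN).trans ?_
  have h1 : 0 ≤ 16 / S.alpha ^ 3 * (1 / S.wsig (a + n) r) := by
    have := hpos n
    positivity
  have e : 16 / (S.alpha ^ 3 * S.wsig a r) = 16 / S.alpha ^ 3 * (1 / S.wsig a r) := by
    field_simp
  rw [e]
  linarith

theorem kap_mul_rhoSum_le (h : S.Scales V b kap B zeta) {t : ℕ} {r : Fin S.m}
    {R U : ℝ} (hR : 0 ≤ R) (hU0 : 0 ≤ U)
    (hL : ∀ k ∈ S.SL, ∀ q ∈ S.noise k, S.rho k q r t ≤ R)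
    (hU : ∀ k ∈ S.SU, ∀ q ∈ S.noise k, S.rho k q r t ≤ U) :
    kap * S.rhoSum t r ≤ V * R + kap * (S.SU.card * S.P * U) := by
  have h1 := mul_le_mul_of_nonneg_left (rhoSum_le hR hU0 hL hU) h.kap_nonneg
  have h2 := mul_le_mul_of_nonneg_right h.kap_small hR
  linarith

theorem rho_le_of_early (h : S.Scales V b kap B zeta) (hdyn : S.ATDyn) (t : ℕ) (ht : S.Early t) :
    ∀ k, ∀ q ∈ S.noise k, ∀ r, S.rho k q r t ≤ b / (5 * V) ∧
      |dot (S.w t r) (S.x k q)| ≤ 2 * b := by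
  induction t using Nat.strong_induction_on with
  | _ t ih =>
  have hb := h.b_pos
  have hV := h.V_pos
  have hα := S.halpha
  have hη := S.heta
  have hσ := S.hsigma0
  have hm : (1 : ℝ) ≤ S.m := by exact_mod_cast S.hm
  have hNpos : (0 : ℝ) < S.N := by exact_mod_cast S.hN
  have hprev : ∀ s < t, ∀ k, ∀ q ∈ S.noise k, ∀ r, |dot (S.w s r) (S.x k q)| ≤ 2 * b :=
    fun s hs k q hq r => (ih s hs (fun s' hs' => ht s' (hs'.trans hs)) k q hq r).2
  have hb2 : 2 * b ≤ B := by linarith [h.b_small]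
  -- on learnable samples the loss derivative is bounded below
  have hpsi : ∀ s < t, ∀ k ∈ S.SL, 1 / 9 ≤ psi (S.marg s k) := by
    intro s hs k hk
    obtain ⟨a, ha1, ha2, ha⟩ := marg_SL s hk
    have ha0 : 0 ≤ a := by linarith [h.half_alpha_le]
    have h1 : S.noiseMarg s k ≤ S.m * S.P * B ^ 3 := noiseMarg_le h.B_pos.le fun r q hq => by
      have := (hprev s hs k q hq r).trans hb2
      rw [← abs_y_mul k] at this
      exact (abs_le.1 this).2
    have h2 : ∑ r, (a * S.wsig s r) ^ 3 ≤ 1 := by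
      have h3 : ∀ r ∈ univ, (a * S.wsig s r) ^ 3 ≤ 1 / S.m := by
        intro r _
        have h4 : a * S.wsig s r ≤ 1 / S.m := by
          rcases le_total 0 (S.wsig s r) with hw | hw
          · exact (mul_le_mul_of_nonneg_right ha2 hw).trans (ht s hs r)
          · exact (mul_nonpos_of_nonneg_of_nonpos ha0 hw).trans (by positivity)
        have h5 : (a * S.wsig s r) ^ 3 ≤ (1 / S.m : ℝ) ^ 3 :=
          (Odd.strictMono_pow (by decide : Odd 3)).monotone h4
        have h6 : (1 / S.m : ℝ) ≤ 1 := by rw [div_le_one (by linarith)]; exact hm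
        exact h5.trans (pow_le_of_le_one (by positivity) h6 (by norm_num))
      have h4 := Finset.sum_le_card_nsmul _ _ _ h3
      rwa [nsmul_eq_mul, Finset.card_univ, Fintype.card_fin, mul_one_div_cancel (by positivity)] at h4
    have h3 : S.marg s k ≤ 2 := by linarith [h.B_small]
    refine le_trans ?_ (psi_anti h3)
    unfold psi
    refine one_div_le_one_div_of_le (by positivity) ?_
    have h5 := Real.exp_one_lt_d9
    have h6 : Real.exp 2 = Real.exp 1 * Real.exp 1 := by rw [← Real.exp_add]; norm_num
    rw [h6]
    nlinarith [Real.exp_pos 1]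
  -- hence the elapsed time is controlled by the learnable gradient mass
  have htime : 3 * S.eta / S.N * t * (S.sigma0 * S.alpha ^ 3 * S.SL.card) ≤ 288 := by
    obtain ⟨r, hr⟩ := h.exists_init_signal
    have hr0 : 0 < S.wsig 0 r := by linarith
    have h1 := h.sum_gradMass_le hdyn hr0 t fun s hs k hk q hq r => by
      rw [zero_add]
      exact (hprev s hs k q hq r).trans hb2
    have h2 : ∀ s ∈ range t, 3 * S.eta / S.N * (S.SL.card * (1 / 9)) ≤ S.gradMass (0 + s) := by
      intro s hs
      rw [zero_add, gradMass]
      refine mul_le_mul_of_nonneg_left ?_ S.rate_nonneg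
      rw [← nsmul_eq_mul]
      exact Finset.card_nsmul_le_sum _ _ _ (hpsi s (Finset.mem_range.1 hs))
    have h3 := Finset.card_nsmul_le_sum _ _ _ h2
    rw [nsmul_eq_mul, Finset.card_range] at h3
    have h4 : 16 / (S.alpha ^ 3 * S.wsig 0 r) ≤ 16 / (S.alpha ^ 3 * (S.sigma0 / 2)) := by gcongr
    have h5 := h3.trans (h1.trans h4)
    rw [le_div_iff₀ (by positivity)] at h5
    nlinarith
  intro k q hq r
  have hρt : ∀ k, ∀ q ∈ S.noise k, ∀ r, S.rho k q r t ≤ 3 * S.eta / S.N * t * (2 * b) ^ 2 := by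
    intro k q hq r
    have : ∀ n ≤ t, S.rho k q r n ≤ 3 * S.eta / S.N * n * (2 * b) ^ 2 := by
      intro n
      induction n with
      | zero => intro _; simp [rho]
      | succ n ihn =>
        intro hn
        rw [rho_succ]
        have h1 := ihn (by omega)
        have h2 := hprev n hn k q hq r
        have h3 : dot (S.w n r) (S.x k q) ^ 2 ≤ (2 * b) ^ 2 :=
          sq_le_sq' (abs_le.1 h2).1 (abs_le.1 h2).2
        have h4 : 3 * S.eta / S.N * psi (S.marg n k) ≤ 3 * S.eta / S.N * 1 :=
          mul_le_mul_of_nonneg_left (psi_le_one _) S.rate_nonneg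
        have h5 := mul_le_mul h4 h3 (sq_nonneg _) (by positivity)
        push_cast
        linarith
    exact this t le_rfl
  have hρ : ∀ k, ∀ q ∈ S.noise k, ∀ r, S.rho k q r t ≤ b / (5 * V) := by
    intro k q hq r
    refine (hρt k q hq r).trans ?_
    rw [le_div_iff₀ (by positivity)]
    have h0 : 0 ≤ 3 * S.eta / S.N * t := mul_nonneg S.rate_nonneg (Nat.cast_nonneg t)
    have h1 := mul_le_mul_of_nonneg_left h.early h0
    have h2 : 3 * S.eta / S.N * t * (5760 * b * V) ≤ 288 := h1.trans htime
    nlinarith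
  refine ⟨hρ k q hq r, ?_⟩
  have hR : 0 ≤ b / (5 * V) := by positivity
  have h1 := h.abs_dot_le hdyn t r k (mem_noise.1 hq)
  have h2 : S.rhoSum t r ≤ S.N * (S.P * (b / (5 * V))) := by
    have := sum_noise_le (s := univ) hR fun k _ q hq => hρ k q hq r
    simpa [rhoSum] using this
  have h3 := mul_le_mul_of_nonneg_left h2 h.kap_nonneg
  have h4 := mul_le_mul_of_nonneg_right h.kap_small hR
  have h5 := mul_le_mul_of_nonneg_left (hρ k q hq r) (by positivity : 0 ≤ 3 / 2 * V)
  have h6 : V * (b / (5 * V)) = b / 5 := by field_simp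
  nlinarith

/-- The noise coefficients and correlations of the learnable samples stay small as long as the
coefficients of the unlearnable samples are at most `U`. -/
theorem rho_le (h : S.Scales V b kap B zeta) (hdyn : S.ATDyn) {U : ℝ} (hU0 : 0 ≤ U)
    (hUB : kap * (S.SU.card * S.P * U) ≤ B / 4) (t : ℕ)
    (hU : ∀ k ∈ S.SU, ∀ q ∈ S.noise k, ∀ r, S.rho k q r t ≤ U) :
    (∀ k ∈ S.SL, ∀ q ∈ S.noise k, ∀ r, S.rho k q r t ≤ b / (5 * V) + B / (10 * V)) ∧
      S.NoiseSmall B t := by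
  induction t using Nat.strong_induction_on with
  | _ t ih =>
  have hb := h.b_pos
  have hB := h.B_pos
  have hV := h.V_pos
  have hα := S.halpha
  have hm : (0 : ℝ) < S.m := by exact_mod_cast S.hm
  have hN : ∀ s < t, S.NoiseSmall B s := fun s hs => (ih s hs fun k hk q hq r =>
    (S.rho_mono k q r hs.le).trans (hU k hk q hq r)).2
  have hρ : ∀ k ∈ S.SL, ∀ q ∈ S.noise k, ∀ r, S.rho k q r t ≤ b / (5 * V) + B / (10 * V) := by
    intro k hk q hq r
    by_cases ht : S.Early t
    · have h1 := (h.rho_le_of_early hdyn t ht k q hq r).1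
      have : 0 ≤ B / (10 * V) := by positivity
      linarith
    · have hex : ∃ s, s < t ∧ ∃ r, 1 / S.m < S.alpha * S.wsig s r := by
        simpa [Early] using ht
      classical
      obtain ⟨a, hat, ⟨r', hr'⟩, hearly⟩ : ∃ a < t, (∃ r, 1 / S.m < S.alpha * S.wsig a r) ∧
          S.Early a :=
        ⟨Nat.find hex, (Nat.find_spec hex).1, (Nat.find_spec hex).2, fun s hs r => by
          by_contra hcon
          exact Nat.find_min hex hs ⟨hs.trans (Nat.find_spec hex).1, r, not_le.1 hcon⟩⟩
      have hpos : 0 < S.wsig a r' := by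
        have h1 : 0 < S.alpha * S.wsig a r' := lt_trans (by positivity) hr'
        exact pos_of_mul_pos_right h1 hα.le
      obtain ⟨n, rfl⟩ := Nat.exists_eq_add_of_lt hat
      rw [add_assoc] at *
      have hNn : ∀ s < n + 1, S.NoiseSmall B (a + s) := fun s hs => hN (a + s) (by omega)
      have h1 := rho_add_le hk r a (n + 1) fun s hs => hNn s hs k hk q hq r
      have h2 := h.sum_gradMass_le hdyn hpos (n + 1) hNn
      have h3 := (h.rho_le_of_early hdyn a hearly k q hq r).1
      have h4 : 16 / (S.alpha ^ 3 * S.wsig a r') ≤ 16 * S.m / S.alpha ^ 2 := by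
        rw [div_lt_iff₀ hm] at hr'
        rw [div_le_div_iff₀ (by positivity) (by positivity)]
        have := mul_le_mul_of_nonneg_left hr'.le (by positivity : 0 ≤ 16 * S.alpha ^ 2)
        linarith
      have h5 := mul_le_mul_of_nonneg_left (h2.trans h4) (sq_nonneg B)
      have h6 : B ^ 2 * (16 * S.m / S.alpha ^ 2) ≤ B / (10 * V) := by
        rw [← mul_div_assoc, div_le_div_iff₀ (by positivity) (by positivity)]
        have := mul_le_mul_of_nonneg_left h.late hB.le
        linarith
      linarith
  refine ⟨hρ, fun k hk q hq r => ?_⟩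
  have hR : 0 ≤ b / (5 * V) + B / (10 * V) := by positivity
  have h1 := h.abs_dot_le hdyn t r k (mem_noise.1 hq)
  have h2 := h.kap_mul_rhoSum_le (r := r) hR hU0 (fun k hk q hq => hρ k hk q hq r)
    (fun k hk q hq => hU k hk q hq r)
  have h5 := mul_le_mul_of_nonneg_left (hρ k hk q hq r) (by positivity : 0 ≤ 3 / 2 * V)
  have h6 : V * (b / (5 * V) + B / (10 * V)) = b / 5 + B / 10 := by field_simp
  have h7 := h.b_small
  linarith

/-- Margin bound on unlearnable samples in terms of their shifted noise coefficients. -/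
theorem marg_SU_le (h : S.Scales V b kap B zeta) (hdyn : S.ATDyn)
    (hVle : ∀ i j, j ≠ S.sig i → V / 2 ≤ sqnorm (S.x i j)) {H : ℝ} (hH : 0 ≤ H)
    (hUB : kap * (S.SU.card * S.P * (H + 2 * b / V)) ≤ B / 4) (t : ℕ)
    (hhat : ∀ k ∈ S.SU, ∀ q ∈ S.noise k, ∀ r, S.rhoHat k q r t ≤ H) {i : Fin S.N}
    (hi : i ∈ S.SU) : S.marg t i ≤ S.m * S.P * (3 / 2 * V * H + B) ^ 3 := by
  have hb := h.b_pos
  have hB := h.B_pos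
  have hV := h.V_pos
  have hU0 : 0 ≤ H + 2 * b / V := by positivity
  have hU : ∀ k ∈ S.SU, ∀ q ∈ S.noise k, ∀ r, S.rho k q r t ≤ H + 2 * b / V := by
    intro k hk q hq r
    have h1 := hhat k hk q hq r
    have h2 := hVle k q (mem_noise.1 hq)
    have h3 := h.init_noise_le r k q (mem_noise.1 hq)
    rw [← abs_y_mul k] at h3
    have h4 : -(2 * b / V) ≤ S.y k * dot (S.w 0 r) (S.x k q) / sqnorm (S.x k q) := by
      have h5 : (2 * b / V) = b / (V / 2) := by field_simp
      have h6 : b / sqnorm (S.x k q) ≤ b / (V / 2) :=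
        div_le_div_of_nonneg_left hb.le (by linarith) h2
      have h7 : -b / sqnorm (S.x k q) ≤ S.y k * dot (S.w 0 r) (S.x k q) / sqnorm (S.x k q) :=
        div_le_div_of_nonneg_right (abs_le.1 h3).1 (by linarith)
      rw [neg_div] at h7
      linarith
    rw [rhoHat] at h1
    linarith
  have hρ := (h.rho_le hdyn hU0 hUB t hU).1
  rw [marg_SU t hi]
  refine noiseMarg_le (by positivity) fun r q hq => ?_
  have hR : 0 ≤ b / (5 * V) + B / (10 * V) := by positivity
  have h1 := abs_dot_w_noise_sub_le hdyn h.kap_nonneg h.cross_le t r i (mem_noise.1 hq)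
  rw [← abs_y_mul i] at h1
  have h2 := h.kap_mul_rhoSum_le (r := r) hR hU0 (fun k hk q hq => hρ k hk q hq r)
    (fun k hk q hq => hU k hk q hq r)
  have h3 := hhat i hi q hq r
  have h4 := hVle i q (mem_noise.1 hq)
  have h5 := h.sqnorm_le i q (mem_noise.1 hq)
  have h6 : V * (b / (5 * V) + B / (10 * V)) = b / 5 + B / 10 := by field_simp
  have hpos : 0 < sqnorm (S.x i q) := by linarith
  have h7 : S.rhoHat i q r t * sqnorm (S.x i q) =
      S.rho i q r t * sqnorm (S.x i q) + S.y i * dot (S.w 0 r) (S.x i q) := by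
    rw [rhoHat]; field_simp
  have h8 : S.rhoHat i q r t * sqnorm (S.x i q) ≤ 3 / 2 * V * H := by
    have h9 := mul_le_mul_of_nonneg_right h3 hpos.le
    have h10 := mul_le_mul_of_nonneg_left h5 hH
    linarith
  have h9 : S.y i * (dot (S.w t r) (S.x i q) -
      (dot (S.w 0 r) (S.x i q) + S.y i * S.rho i q r t * sqnorm (S.x i q))) =
      S.y i * dot (S.w t r) (S.x i q) - S.y i * dot (S.w 0 r) (S.x i q) -
        S.rho i q r t * sqnorm (S.x i q) := by
    linear_combination (-(S.rho i q r t * sqnorm (S.x i q))) * S.y_sq i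
  rw [h9] at h1
  have h10 := (abs_le.1 h1).2
  have h11 := h.b_small
  linarith

end Scales

theorem mul_le_one_of_le_inv_mul_div {x C M l z : ℝ} (hC : 0 < C) (hl : 0 < l) (hz : 0 < z)
    (hx : x ≤ C⁻¹ * M / l) (hM : M ≤ 1 / z) : x * z * l * C ≤ 1 := by
  have h1 : C⁻¹ * M / l ≤ C⁻¹ * (1 / z) / l := by gcongr
  have h2 : C⁻¹ * (1 / z) / l = 1 / (z * l * C) := by field_simp
  have h3 := hx.trans (h1.trans h2.le)
  rw [le_div_iff₀ (by positivity)] at h3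
  linarith

/-- The logarithmic factor `log (T N m P / δ)`. -/
def logFactor (S : Setting) : ℝ := Real.log ((S.T : ℝ) * S.N * S.m * S.P / S.delta)

theorem card_SL_add_card_SU (S : Setting) : (S.SL.card : ℝ) + S.SU.card = S.N := by
  have h := Finset.card_union_of_disjoint S.hdisj
  rw [S.hunion, Finset.card_univ, Fintype.card_fin] at h
  exact_mod_cast h.symm

/-- Consequences of the parameter conditions in polynomial form. -/
structure ParamBounds (S : Setting) (C : ℝ) : Prop where
  one_le_log : 1 ≤ S.logFactor
  one_le_T : (1 : ℝ) ≤ S.T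
  dim : 100 * (S.m * S.P * S.N * S.logFactor ^ 2) ≤ Real.sqrt S.d
  card_SU_le : S.SU.card * C ≤ 2 * S.logFactor
  sq_alpha : (C * S.sigman * Real.sqrt S.d * S.logFactor) ^ 2 ≤ S.alpha ^ 2 * S.N
  cube_alpha : (C * S.sigman * Real.sqrt S.d * S.logFactor) ^ 3 ≤ S.alpha ^ 3 * S.SL.card
  sigma0_noise : S.sigma0 * S.sigman * S.m ^ 2 * S.d * S.logFactor * C ≤ 1
  sigma0_signal : S.m * (S.sigma0 * S.alpha * S.logFactor * C) ^ 3 ≤ 1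
  eta_alpha : S.eta * S.alpha ^ 2 * C ≤ 1
  eps_le : S.eps ≤ S.alpha / 2

set_option maxHeartbeats 400000 in
theorem CondH.paramBounds {C : ℝ} (hC : 10000 ≤ C) (hH : S.CondH C) (hS : S.SparseRegime C) :
    S.ParamBounds C := by
  obtain ⟨-, hT, hdim, hsig, hs0, heta, -, heps, hm, -, hP2, -⟩ := hH
  obtain ⟨-, hpun, hNbig⟩ := hS
  have hα := S.halpha
  have hσ := S.hsigman
  have hσ0 := S.hsigma0
  have hη := S.heta
  have hδ0 := S.hdelta0
  have hδ1 := S.hdelta1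
  have hC0 : 0 < C := by linarith
  have hN1 : (1 : ℝ) ≤ S.N := by exact_mod_cast S.hN
  have hm1 : (1 : ℝ) ≤ S.m := by exact_mod_cast S.hm
  have hP2' : (2 : ℝ) ≤ S.P := by exact_mod_cast hP2
  have hd1 : (1 : ℝ) ≤ S.d := by exact_mod_cast S.hd
  have hT0 : (0 : ℝ) < S.T := lt_of_lt_of_le (by positivity) hT
  have hT1 : (1 : ℝ) ≤ S.T := by
    have : 0 < S.T := by exact_mod_cast hT0
    exact_mod_cast this
  have hm3 : (3 : ℝ) ≤ S.m := by
    have h1 : (2 : ℝ) ≤ S.N * S.P / S.delta := by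
      rw [le_div_iff₀ hδ0]; nlinarith
    have h2 := Real.log_le_log (by norm_num) h1
    have h3 := Real.log_two_gt_d9
    nlinarith
  have hL1 : 1 ≤ S.logFactor := by
    rw [logFactor, Real.le_log_iff_exp_le (by positivity), le_div_iff₀ hδ0]
    have h1 : (6 : ℝ) ≤ S.T * S.N * S.m * S.P := by
      have a1 : (1 : ℝ) ≤ S.T * S.N := one_le_mul_of_one_le_of_one_le hT1 hN1
      have a2 : (1 : ℝ) * 3 ≤ S.T * S.N * S.m := by gcongr
      calc (6 : ℝ) = 1 * 3 * 2 := by norm_num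
        _ ≤ S.T * S.N * S.m * S.P := by gcongr
    have h2 := Real.exp_one_lt_d9
    linarith [mul_le_mul_of_nonneg_left hδ1.le (Real.exp_pos 1).le]
  set D := Real.sqrt S.d with hD
  have hDsq : D ^ 2 = S.d := Real.sq_sqrt (by positivity)
  have hD1 : 1 ≤ D := by rw [hD, Real.one_le_sqrt]; exact hd1
  set lg := Real.log ((S.T : ℝ) * S.d * S.N * S.m * S.P / S.delta) with hlg
  have hlgL : S.logFactor ≤ lg := by
    refine Real.log_le_log (by positivity) ?_
    gcongr
    exact le_mul_of_one_le_right (by positivity) hd1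
  have hlgd : Real.log S.d ≤ lg := by
    refine Real.log_le_log (by positivity) ?_
    rw [le_div_iff₀ hδ0]
    have a1 : (1 : ℝ) ≤ S.T * S.N := one_le_mul_of_one_le_of_one_le hT1 hN1
    have a2 : (1 : ℝ) ≤ S.T * S.N * S.m := one_le_mul_of_one_le_of_one_le a1 hm1
    have a3 : (1 : ℝ) ≤ S.T * S.N * S.m * S.P :=
      one_le_mul_of_one_le_of_one_le a2 (by linarith)
    calc (S.d : ℝ) * S.delta ≤ S.d * 1 := by gcongr
      _ ≤ S.d * (S.T * S.N * S.m * S.P) := by gcongr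
      _ = _ := by ring
  change C * S.m ^ 2 * S.P ^ 2 * S.N ^ 2 * S.logFactor ^ 4 ≤ S.d at hdim
  change C * S.sigman * D * S.logFactor / _ ≤ _ at hsig
  change _ ≤ _ / S.logFactor at heta
  have hL0 : 0 < S.logFactor := by linarith
  have hlg0 : 0 < lg := by linarith
  have hlg1 : 1 ≤ lg := by linarith
  -- learning rate
  have heta2 : S.eta * S.alpha ^ 2 * S.logFactor * C ≤ 1 :=
    mul_le_one_of_le_inv_mul_div hC0 hL0 (by positivity) heta (min_le_right _ _)
  have heta1 : S.eta * (S.sigman ^ 2 * S.d) * S.logFactor * C ≤ 1 :=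
    mul_le_one_of_le_inv_mul_div hC0 hL0 (by positivity) heta
      ((min_le_left _ _).trans (min_le_right _ _))
  -- initialization scale
  have hs2 : S.sigma0 * (S.alpha * (S.m : ℝ) ^ ((2 : ℝ) / 3)) * lg * C ≤ 1 :=
    mul_le_one_of_le_inv_mul_div hC0 hlg0 (by positivity) hs0
      ((min_le_left _ _).trans (min_le_right _ _))
  have hs3 : S.sigma0 * (S.sigman * S.m ^ 2 * Real.sqrt S.P * S.d) * lg * C ≤ 1 :=
    mul_le_one_of_le_inv_mul_div hC0 hlg0 (by positivity) hs0 (min_le_right _ _)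
  have hsn : S.sigma0 * S.sigman * S.m ^ 2 * S.d * S.logFactor * C ≤ 1 := by
    have hsP : 1 ≤ Real.sqrt S.P := by rw [Real.one_le_sqrt]; linarith
    calc S.sigma0 * S.sigman * S.m ^ 2 * S.d * S.logFactor * C
        = S.sigma0 * (S.sigman * S.m ^ 2 * 1 * S.d) * S.logFactor * C := by ring
      _ ≤ S.sigma0 * (S.sigman * S.m ^ 2 * Real.sqrt S.P * S.d) * lg * C := by gcongr
      _ ≤ 1 := hs3
  have hss : S.m * (S.sigma0 * S.alpha * S.logFactor * C) ^ 3 ≤ 1 := by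
    have h1 : ((S.m : ℝ) ^ ((2 : ℝ) / 3)) ^ 3 = (S.m : ℝ) ^ 2 := by
      rw [← Real.rpow_natCast, ← Real.rpow_mul (by positivity)]
      norm_num
    have h2 : S.sigma0 * S.alpha * S.logFactor * C * (S.m : ℝ) ^ ((2 : ℝ) / 3) ≤ 1 := by
      calc S.sigma0 * S.alpha * S.logFactor * C * (S.m : ℝ) ^ ((2 : ℝ) / 3)
          = S.sigma0 * (S.alpha * (S.m : ℝ) ^ ((2 : ℝ) / 3)) * S.logFactor * C := by ring
        _ ≤ S.sigma0 * (S.alpha * (S.m : ℝ) ^ ((2 : ℝ) / 3)) * lg * C := by gcongr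
        _ ≤ 1 := hs2
    have h3 := pow_le_one₀ (n := 3) (by positivity) h2
    rw [mul_pow, h1] at h3
    have h4 : (S.m : ℝ) ≤ S.m ^ 2 := le_self_pow₀ hm1 (by norm_num)
    calc S.m * (S.sigma0 * S.alpha * S.logFactor * C) ^ 3
        ≤ S.m ^ 2 * (S.sigma0 * S.alpha * S.logFactor * C) ^ 3 := by gcongr
      _ ≤ 1 := by linarith
  -- the horizon dominates the dimension
  have hDT : D ≤ S.T := by
    refine le_trans ?_ hT
    rw [le_div_iff₀ (by positivity)]
    have h1 : S.eta * (S.sigman ^ 2 * S.d) ≤ 1 := by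
      refine le_trans ?_ heta1
      have h0 : 0 ≤ S.eta * (S.sigman ^ 2 * S.d) := by positivity
      have : 1 ≤ S.logFactor * C := one_le_mul_of_one_le_of_one_le hL1 (by linarith)
      linarith [mul_le_mul_of_nonneg_left this h0]
    have h2 : S.sigma0 * S.sigman * S.d ≤ 1 := by
      refine le_trans ?_ hsn
      have h0 : 0 ≤ S.sigma0 * S.sigman * S.d := by positivity
      have h3 : 1 ≤ S.logFactor * C := one_le_mul_of_one_le_of_one_le hL1 (by linarith)
      have h4 : (1 : ℝ) ≤ S.m ^ 2 * (S.logFactor * C) :=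
        one_le_mul_of_one_le_of_one_le (one_le_pow₀ hm1) h3
      linarith [mul_le_mul_of_nonneg_left h4 h0]
    have h3 := mul_le_mul h1 h2 (by positivity) zero_le_one
    have h4 : 1 ≤ C * S.N := one_le_mul_of_one_le_of_one_le (by linarith) hN1
    calc D * (S.eta * S.sigma0 * S.sigman ^ 3 * (S.d * D))
        = S.eta * (S.sigman ^ 2 * S.d) * (S.sigma0 * S.sigman * D ^ 2) := by ring
      _ = S.eta * (S.sigman ^ 2 * S.d) * (S.sigma0 * S.sigman * S.d) := by rw [hDsq]
      _ ≤ C * S.N := by linarith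
  have hlogd : Real.log S.d ≤ 2 * S.logFactor := by
    rw [← hDsq, Real.log_pow]
    push_cast
    have : Real.log D ≤ S.logFactor := by
      refine Real.log_le_log (by positivity) (hDT.trans ?_)
      rw [le_div_iff₀ hδ0]
      have a2 : (1 : ℝ) ≤ S.N * S.m := one_le_mul_of_one_le_of_one_le hN1 hm1
      have a3 : (1 : ℝ) ≤ S.N * S.m * S.P := one_le_mul_of_one_le_of_one_le a2 (by linarith)
      calc (S.T : ℝ) * S.delta ≤ S.T * (S.N * S.m * S.P) := by gcongr; linarith
        _ = _ := by ring
    linarith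
  -- unlearnable and learnable sample counts
  have hcardU : S.SU.card * C ≤ Real.log S.d := by
    rw [pun, div_le_div_iff_of_pos_right (by linarith)] at hpun
    have := mul_le_mul_of_nonneg_right hpun hC0.le
    rwa [mul_right_comm, inv_mul_cancel₀ hC0.ne', one_mul] at this
  have hNlg : lg ≤ S.N := by
    refine le_trans ?_ hNbig
    have a2 : (1 : ℝ) ≤ C * S.m := one_le_mul_of_one_le_of_one_le (by linarith) hm1
    have a3 : (1 : ℝ) ≤ C * S.m * S.P := one_le_mul_of_one_le_of_one_le a2 (by linarith)
    exact le_mul_of_one_le_left hlg0.le a3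
  have hsum := S.card_SL_add_card_SU
  have hcardL : (1 : ℝ) ≤ S.SL.card := by
    have h1 : (0 : ℝ) < S.SL.card := by
      have : (S.SU.card : ℝ) * 2 ≤ S.SU.card * C := by gcongr; linarith
      linarith
    have h2 : 0 < S.SL.card := by exact_mod_cast h1
    exact_mod_cast h2
  have hK : (S.N : ℝ) * (1 - S.pun) = S.SL.card := by
    rw [pun, mul_sub, mul_one, mul_div_cancel₀ _ (by positivity)]
    linarith
  -- signal strength
  rw [hK] at hsig
  set c := (S.SL.card : ℝ) ^ ((1 : ℝ) / 3) with hc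
  have hc3 : c ^ 3 = S.SL.card := by
    rw [hc, ← Real.rpow_natCast, ← Real.rpow_mul (by positivity)]
    norm_num
  have hc1 : 1 ≤ c := Real.one_le_rpow hcardL (by norm_num)
  rw [div_le_iff₀ (by positivity)] at hsig
  have h0 : 0 ≤ C * S.sigman * D * S.logFactor := by positivity
  refine ⟨hL1, hT1, ?_, hcardU.trans hlogd, ?_, ?_, hsn, hss, ?_, ?_⟩
  · rw [Real.le_sqrt (by positivity) (by positivity)]
    refine le_trans ?_ hdim
    calc (100 * (S.m * S.P * S.N * S.logFactor ^ 2)) ^ 2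
        = 10000 * S.m ^ 2 * S.P ^ 2 * S.N ^ 2 * S.logFactor ^ 4 := by ring
      _ ≤ _ := by gcongr
  · refine (pow_le_pow_left₀ h0 hsig 2).trans ?_
    rw [mul_pow]
    have : c ^ 2 ≤ S.N := by
      have h1 : c ^ 2 ≤ c ^ 3 := pow_le_pow_right₀ hc1 (by norm_num)
      have h2 := S.card_SL_le
      linarith
    gcongr
  · refine (pow_le_pow_left₀ h0 hsig 3).trans ?_
    rw [mul_pow, hc3]
  · refine le_trans ?_ heta2
    have h1 : 0 ≤ S.eta * S.alpha ^ 2 * C := by positivity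
    linarith [mul_le_mul_of_nonneg_left hL1 h1]
  · have h1 : S.eps ≤ C⁻¹ * S.alpha := heps.le.trans (by gcongr; exact min_le_left _ _)
    have h2 : C⁻¹ ≤ 1 / 2 := by
      rw [inv_le_comm₀ hC0 (by norm_num)]; linarith
    linarith [mul_le_mul_of_nonneg_right h2 hα.le]

theorem log_sixteen_mul_le {z l : ℝ} (hz : 0 < z) (hzl : Real.log z ≤ l) :
    Real.log (16 * z) ≤ 3 + l := by
  rw [Real.log_mul (by norm_num) hz.ne']
  have h1 : Real.log 16 = 4 * Real.log 2 := by
    rw [show (16 : ℝ) = 2 ^ 4 by norm_num, Real.log_pow]; norm_num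
  have h2 := Real.log_two_lt_d9
  linarith

theorem sqrt_le_of_le_sq_mul {a l c : ℝ} (hc : 0 ≤ c) (hl : 1 ≤ l) (h : a ≤ c ^ 2 * l) :
    Real.sqrt a ≤ c * l := by
  refine Real.sqrt_le_iff.2 ⟨by positivity, h.trans ?_⟩
  rw [mul_pow]
  have : l ≤ l ^ 2 := by nlinarith
  gcongr

set_option maxHeartbeats 400000 in
/-- Scale relations on the event `E` under the parameter conditions. -/
theorem scales_of_condH {C1 C mu : ℝ} (hC1 : 1 ≤ C1) (hC : 10000 ≤ C) (hCC1 : C1 ≤ C)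
    (hmu1 : 1 ≤ mu) (hmu : mu ^ 3 = S.m * S.P) (hE : S.EventE) (hP : S.ParamBounds C) :
    S.Scales (S.sigman ^ 2 * S.d) (4 * S.sigma0 * S.sigman * Real.sqrt S.d * S.logFactor)
      (5 * S.sigman ^ 2 * Real.sqrt S.d * S.logFactor) (C1 / (C * S.m * mu * S.N))
      (3 * S.sigma0 * S.logFactor) := by
  obtain ⟨hP1, hP2, -, -, hP5, hP6, hP7, -⟩ := hE
  have hα := S.halpha
  have hσ := S.hsigman
  have hσ0 := S.hsigma0
  have hη := S.heta
  have hδ0 := S.hdelta0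
  have hδ1 := S.hdelta1
  have hC0 : 0 < C := by linarith
  have hN1 : (1 : ℝ) ≤ S.N := by exact_mod_cast S.hN
  have hm1 : (1 : ℝ) ≤ S.m := by exact_mod_cast S.hm
  have hP1' : (1 : ℝ) ≤ S.P := by exact_mod_cast S.hP
  have hd1 : (1 : ℝ) ≤ S.d := by exact_mod_cast S.hd
  have hT1 := hP.one_le_T
  have hL1 := hP.one_le_log
  have hdim := hP.dim
  set l := S.logFactor with hl
  have hlog : ∀ z : ℝ, 0 < z → z ≤ S.T * S.N * S.m * S.P / S.delta →
      Real.log (16 * z) ≤ 4 * l := by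
    intro z hz hzl
    have := log_sixteen_mul_le hz (Real.log_le_log hz hzl)
    rw [← logFactor, ← hl] at this
    linarith
  have hTN : (1 : ℝ) ≤ S.T * S.N := one_le_mul_of_one_le_of_one_le hT1 hN1
  have hlog5 : Real.log ((16 : ℝ) * S.m / S.delta) ≤ 4 * l := by
    rw [mul_div_assoc]
    refine hlog _ (by positivity) ?_
    gcongr
    calc (S.m : ℝ) = 1 * S.m * 1 := by ring
      _ ≤ S.T * S.N * S.m * S.P := by gcongr
  have hlog6 : Real.log ((16 : ℝ) * S.N * S.m * S.P / S.delta) ≤ 4 * l := by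
    rw [show (16 : ℝ) * S.N * S.m * S.P / S.delta = 16 * (S.N * S.m * S.P / S.delta) by ring]
    refine hlog _ (by positivity) ?_
    gcongr
    nlinarith
  have hlog2 : Real.log ((16 : ℝ) * S.N ^ 2 * S.P ^ 2 / S.delta) ≤ 5 * l := by
    rw [show (16 : ℝ) * S.N ^ 2 * S.P ^ 2 / S.delta = 16 * (S.N ^ 2 * S.P ^ 2 / S.delta) by ring]
    have h1 : Real.log (S.N ^ 2 * S.P ^ 2 / S.delta) ≤ 2 * l := by
      have h2 : Real.log ((S.T * S.N * S.m * S.P / S.delta) ^ 2) = 2 * l := by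
        rw [Real.log_pow, hl, logFactor]; norm_num
      rw [← h2]
      refine Real.log_le_log (by positivity) ?_
      have h3 : (S.N : ℝ) * S.P ≤ S.T * S.N * S.m * S.P := by
        calc (S.N : ℝ) * S.P = 1 * S.N * 1 * S.P := by ring
          _ ≤ S.T * S.N * S.m * S.P := by gcongr
      rw [div_pow, ← mul_pow]
      gcongr
      nlinarith
    have := log_sixteen_mul_le (by positivity) h1
    linarith
  set D := Real.sqrt S.d with hD
  have hDsq : D ^ 2 = S.d := Real.sq_sqrt (by positivity)
  have hD1 : 1 ≤ D := by rw [hD, Real.one_le_sqrt]; exact hd1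
  have hD0 : 0 < D := by linarith
  have hl0 : 0 < l := by linarith
  have hll : l ≤ l ^ 2 := le_self_pow₀ hL1 (by norm_num)
  have hmu_le : mu ≤ S.m * S.P := by rw [← hmu]; exact le_self_pow₀ hmu1 (by norm_num)
  have hdimN : 100 * (S.m * S.P * S.N) ≤ D := by
    refine le_trans ?_ hdim
    have : (1 : ℝ) ≤ l ^ 2 := one_le_pow₀ hL1
    have h0 : (0 : ℝ) ≤ S.m * S.P * S.N := by positivity
    linarith [mul_le_mul_of_nonneg_left this h0]
  have hBpos : 0 < C1 / (C * S.m * mu * S.N) := by positivity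
  have hBmu : C1 / (C * S.m * mu * S.N) ≤ 1 / (S.m * mu * S.N) := by
    rw [div_le_div_iff₀ (by positivity) (by positivity)]
    have : C1 * (S.m * mu * S.N) ≤ C * (S.m * mu * S.N) := by gcongr
    linarith
  refine
    { V_pos := by positivity
      b_pos := by positivity
      kap_nonneg := by positivity
      zeta_nonneg := by positivity
      two_le_d := ?_
      half_alpha_le := by linarith [hP.eps_le]
      sqnorm_le := fun i j hj => by linarith [(hP1 i j hj).2]
      cross_le := fun i k j q hj hq hne => (hP2 i k j q hj hq hne).trans ?_
      init_noise_le := fun r i j hj => (hP6 r i j hj).trans ?_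
      le_init_signal := fun r => ?_
      exists_init_signal := by
        obtain ⟨r, hr⟩ := hP7
        exact ⟨r, by rwa [dot_wt_e1] at hr⟩
      zeta_small := ?_
      kap_small := ?_
      b_small := ?_
      B_small := ?_
      step_small := ?_
      early := ?_
      late := ?_ }
  · have h1 : (100 : ℝ) ≤ D := by
      have : (1 : ℝ) ≤ S.m * S.P * S.N :=
        one_le_mul_of_one_le_of_one_le (one_le_mul_of_one_le_of_one_le hm1 hP1') hN1
      linarith
    have h2 : (2 : ℝ) ≤ S.d := by
      rw [← hDsq]
      linarith [le_self_pow₀ hD1 (two_ne_zero)]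
    exact_mod_cast h2
  · rw [Real.sqrt_mul (by positivity)]
    have h1 := sqrt_le_of_le_sq_mul (c := 5 / 2) (by norm_num) hL1 (hlog2.trans (by linarith))
    calc 2 * S.sigman ^ 2 * (D * _) ≤ 2 * S.sigman ^ 2 * (D * (5 / 2 * l)) := by gcongr
      _ = _ := by ring
  · rw [Real.sqrt_mul (by positivity)]
    have h1 := sqrt_le_of_le_sq_mul (c := 2) (by norm_num) hL1 (hlog6.trans (by linarith))
    calc 2 * S.sigma0 * S.sigman * (D * _) ≤ 2 * S.sigma0 * S.sigman * (D * (2 * l)) := by gcongr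
      _ = _ := by ring
  · have h1 := hP5 r
    rw [dot_wt_e1] at h1
    have h2 := sqrt_le_of_le_sq_mul (a := 2 * Real.log ((16 : ℝ) * S.m / S.delta)) (c := 3)
      (by norm_num) hL1 (by linarith)
    have h3 := mul_le_mul_of_nonneg_left h2 hσ0.le
    linarith [(abs_le.1 h1).1]
  · have h1 := hP.sigma0_signal
    have h2 : S.alpha * (3 * S.sigma0 * l) ≤ S.sigma0 * S.alpha * l * C := by
      have : S.sigma0 * S.alpha * l * 3 ≤ S.sigma0 * S.alpha * l * C := by gcongr; linarith
      linarith
    refine le_trans ?_ h1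
    gcongr
  · have h1 : 5 * (S.N * S.P * l) ≤ D := by
      refine le_trans ?_ hdim
      calc 5 * (S.N * S.P * l) = 5 * (1 * S.P * S.N * l) := by ring
        _ ≤ 100 * (S.m * S.P * S.N * l ^ 2) := by gcongr; norm_num
    rw [← hDsq]
    calc S.N * S.P * (5 * S.sigman ^ 2 * D * l) = S.sigman ^ 2 * D * (5 * (S.N * S.P * l)) := by
          ring
      _ ≤ S.sigman ^ 2 * D * D := by gcongr
      _ = _ := by ring
  · rw [le_div_iff₀ (by positivity)]
    have h1 := hP.sigma0_noise
    rw [← hl, ← hDsq] at h1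
    calc 3 * (4 * S.sigma0 * S.sigman * D * l) * (C * S.m * mu * S.N)
        ≤ 3 * (4 * S.sigma0 * S.sigman * D * l) * (C * S.m * (S.m * S.P) * S.N) := by gcongr
      _ = 12 * (S.sigma0 * S.sigman * D * l * C * S.m) * (S.m * S.P * S.N) := by ring
      _ ≤ 12 * (S.sigma0 * S.sigman * D * l * C * S.m) * (D / 100) := by gcongr; linarith
      _ = 12 / 100 * (S.sigma0 * S.sigman * S.m * D ^ 2 * l * C) := by ring
      _ ≤ 12 / 100 * (S.sigma0 * S.sigman * S.m ^ 2 * D ^ 2 * l * C) := by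
          gcongr; exact le_self_pow₀ hm1 (by norm_num)
      _ ≤ C1 := by linarith
  · have h1 : C1 / (C * S.m * mu * S.N) ≤ 1 / mu := by
      refine hBmu.trans (one_div_le_one_div_of_le (by positivity) ?_)
      calc mu = 1 * mu * 1 := by ring
        _ ≤ S.m * mu * S.N := by gcongr
    calc S.m * S.P * (C1 / (C * S.m * mu * S.N)) ^ 3 ≤ S.m * S.P * (1 / mu) ^ 3 := by gcongr
      _ = 1 := by rw [← hmu]; field_simp
  · have h1 := hP.eta_alpha
    have h2 : S.eta * S.alpha ^ 2 * 48 ≤ S.eta * S.alpha ^ 2 * C := by gcongr; linarith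
    linarith
  · have h1 := mul_le_mul_of_nonneg_left hP.cube_alpha hσ0.le
    rw [← hl] at h1
    have h2 : (23040 : ℝ) * l ≤ C ^ 3 * l ^ 3 := by
      have a1 : (23040 : ℝ) ≤ C ^ 3 := by
        calc (23040 : ℝ) ≤ 10000 ^ 3 := by norm_num
          _ ≤ C ^ 3 := by gcongr
      have a2 : l ≤ l ^ 3 := le_self_pow₀ hL1 (by norm_num)
      gcongr
    have h3 : (0 : ℝ) ≤ S.sigma0 * S.sigman ^ 3 * D ^ 3 := by positivity
    rw [← hDsq]
    calc 5760 * (4 * S.sigma0 * S.sigman * D * l) * (S.sigman ^ 2 * D ^ 2)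
        = S.sigma0 * S.sigman ^ 3 * D ^ 3 * (23040 * l) := by ring
      _ ≤ S.sigma0 * S.sigman ^ 3 * D ^ 3 * (C ^ 3 * l ^ 3) := by gcongr
      _ = S.sigma0 * (C * S.sigman * D * l) ^ 3 := by ring
      _ ≤ S.sigma0 * (S.alpha ^ 3 * S.SL.card) := h1
      _ = _ := by ring
  · have h1 := hP.sq_alpha
    rw [← hl] at h1
    have h2 : (160 : ℝ) ≤ C ^ 2 * l ^ 2 := by
      have a1 : (160 : ℝ) ≤ C ^ 2 := by
        calc (160 : ℝ) ≤ 10000 ^ 2 := by norm_num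
          _ ≤ C ^ 2 := by gcongr
      have a2 : 1 ≤ l ^ 2 := one_le_pow₀ hL1
      linarith [mul_le_mul_of_nonneg_left a2 (sq_nonneg C)]
    have h3 : S.N * (S.m * (1 / (S.m * mu * S.N))) ≤ 1 := by
      have : (S.N : ℝ) * (S.m * (1 / (S.m * mu * S.N))) = 1 / mu := by field_simp
      rw [this, div_le_one (by linarith)]; exact hmu1
    refine le_of_mul_le_mul_right ?_ (by linarith : (0 : ℝ) < S.N)
    rw [← hDsq]
    calc 160 * (C1 / (C * S.m * mu * S.N)) * S.m * (S.sigman ^ 2 * D ^ 2) * S.N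
        ≤ 160 * (1 / (S.m * mu * S.N)) * S.m * (S.sigman ^ 2 * D ^ 2) * S.N := by gcongr
      _ = 160 * (S.sigman ^ 2 * D ^ 2) * (S.N * (S.m * (1 / (S.m * mu * S.N)))) := by ring
      _ ≤ 160 * (S.sigman ^ 2 * D ^ 2) * 1 := by gcongr
      _ ≤ (C ^ 2 * l ^ 2) * (S.sigman ^ 2 * D ^ 2) * 1 := by gcongr
      _ = (C * S.sigman * D * l) ^ 2 := by ring
      _ ≤ _ := h1

theorem rhoHat_le_rhoHatMax (t : ℕ) {k : Fin S.N} (hk : k ∈ S.SU) {q : Fin S.P}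
    (hq : q ≠ S.sig k) (r : Fin S.m) : S.rhoHat k q r t ≤ S.rhoHatMax t := by
  refine le_csSup ?_ ⟨r, k, hk, q, hq, rfl⟩
  refine Set.Finite.bddAbove ((Set.finite_range
    fun a : Fin S.m × Fin S.N × Fin S.P => S.rhoHat a.2.1 a.2.2 a.1 t).subset ?_)
  rintro z ⟨r, k, -, q, -, rfl⟩
  exact ⟨(r, k, q), rfl⟩

end Setting

/-- The gradient bound on unlearnable samples for every `C₁ ≥ 1` and every sufficiently large
`C`. -/
theorem psi_marg_bounds_of_rhoHatMax_le {C1 C : ℝ} (hC1 : 1 ≤ C1) (hC : 10000 ≤ C) (hCC1 : C1 ≤ C)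
    {S : Setting} (hdyn : S.ATDyn) (hE : S.EventE) (hH : S.CondH C) (hS : S.SparseRegime C) {t : ℕ}
    (ht : S.rhoHatMax t ≤ C1 / (((S.m : ℝ) * S.P) ^ ((1 : ℝ) / 3) * S.sigman ^ 2 * S.d))
    {i : Fin S.N} (hi : i ∈ S.SU) :
    1 / (1 + Real.exp (4 * C1 ^ 3)) ≤ psi (S.marg t i) ∧ psi (S.marg t i) ≤ 1 := by
  refine ⟨?_, psi_le_one _⟩
  suffices hmarg : S.marg t i ≤ 4 * C1 ^ 3 from psi_anti hmarg
  have hσ := S.hsigman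
  have hC0 : 0 < C := by linarith
  have hN1 : (1 : ℝ) ≤ S.N := by exact_mod_cast S.hN
  have hm1 : (1 : ℝ) ≤ S.m := by exact_mod_cast S.hm
  have hP1 : (1 : ℝ) ≤ S.P := by exact_mod_cast S.hP
  have hd1 : (1 : ℝ) ≤ S.d := by exact_mod_cast S.hd
  set mu := ((S.m : ℝ) * S.P) ^ ((1 : ℝ) / 3) with hmu_def
  have hmu1 : 1 ≤ mu :=
    Real.one_le_rpow (one_le_mul_of_one_le_of_one_le hm1 hP1) (by norm_num)
  have hmu : mu ^ 3 = S.m * S.P := by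
    rw [hmu_def, ← Real.rpow_natCast, ← Real.rpow_mul (by positivity)]
    norm_num
  have hP := Setting.CondH.paramBounds hC hH hS
  have hsc := Setting.scales_of_condH hC1 hC hCC1 hmu1 hmu hE hP
  have hL1 := hP.one_le_log
  have hdim := hP.dim
  have hcard := hP.card_SU_le
  have hbB := hsc.b_small
  set l := S.logFactor
  set D := Real.sqrt S.d with hD
  have hDsq : D ^ 2 = S.d := Real.sq_sqrt (by positivity)
  have hD0 : 0 < D := Real.sqrt_pos.2 (by positivity)
  set b := 4 * S.sigma0 * S.sigman * D * l
  set B := C1 / (C * S.m * mu * S.N) with hB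
  set V := S.sigman ^ 2 * (S.d : ℝ) with hV
  have hV0 : 0 < V := by positivity
  have hBle : B ≤ C1 / mu / 10000 := by
    rw [hB, div_div]
    refine div_le_div_of_nonneg_left (by positivity) (by positivity) ?_
    calc mu * 10000 = 10000 * 1 * mu * 1 := by ring
      _ ≤ C * S.m * mu * S.N := by gcongr
  have hmu0 : 0 < C1 / mu := by positivity
  have hb2 : 2 * b / V ≤ C1 / (mu * V) := by
    rw [div_le_div_iff₀ hV0 (by positivity)]
    have h1 : 2 * b ≤ C1 / mu := by linarith [hsc.b_pos]
    rw [le_div_iff₀ (by linarith)] at h1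
    nlinarith
  have hUB : 5 * S.sigman ^ 2 * D * l * (S.SU.card * S.P * (C1 / (mu * V) + 2 * b / V)) ≤
      B / 4 := by
    have hd' : l ^ 2 * S.P / D ≤ 1 / (100 * (S.m * S.N)) := by
      rw [div_le_div_iff₀ hD0 (by positivity)]
      linarith
    calc 5 * S.sigman ^ 2 * D * l * (S.SU.card * S.P * (C1 / (mu * V) + 2 * b / V))
        ≤ 5 * S.sigman ^ 2 * D * l * (S.SU.card * S.P * (C1 / (mu * V) + C1 / (mu * V))) := by
          gcongr
      _ = 10 * C1 / mu * (S.SU.card * C) / C * l * S.P / D := by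
          rw [hV, ← hDsq]; field_simp; ring
      _ ≤ 10 * C1 / mu * (2 * l) / C * l * S.P / D := by gcongr
      _ = 20 * C1 / (mu * C) * (l ^ 2 * S.P / D) := by field_simp; ring
      _ ≤ 20 * C1 / (mu * C) * (1 / (100 * (S.m * S.N))) := by gcongr
      _ = B / 5 := by rw [hB]; field_simp; norm_num
      _ ≤ B / 4 := by linarith [hsc.B_pos]
  have hhat : ∀ k ∈ S.SU, ∀ q ∈ S.noise k, ∀ r, S.rhoHat k q r t ≤ C1 / (mu * V) := by
    intro k hk q hq r
    refine (Setting.rhoHat_le_rhoHatMax t hk (Setting.mem_noise.1 hq) r).trans ?_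
    rwa [hV, ← mul_assoc]
  refine (hsc.marg_SU_le hdyn (fun k q hq => (hE.1 k q hq).1) (by positivity) hUB t hhat hi).trans
    ?_
  have h1 : 3 / 2 * V * (C1 / (mu * V)) + B ≤ 31 / 20 * (C1 / mu) := by
    have : 3 / 2 * V * (C1 / (mu * V)) = 3 / 2 * (C1 / mu) := by field_simp
    linarith
  have h2 : 0 ≤ 3 / 2 * V * (C1 / (mu * V)) + B := by
    have := hsc.B_pos
    positivity
  calc S.m * S.P * (3 / 2 * V * (C1 / (mu * V)) + B) ^ 3
      ≤ S.m * S.P * (31 / 20 * (C1 / mu)) ^ 3 := by gcongr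
    _ = (31 / 20) ^ 3 * C1 ^ 3 := by rw [← hmu]; field_simp
    _ ≤ 4 * C1 ^ 3 := by gcongr; norm_num

/-- Gradient bound on unlearnable samples. On the event `E`, under
Condition (H) in the sparse-unlearnable regime, if the maximum shifted noise
coefficient is at most `C₁/((mP)^{1/3} σ_n² d)`, then on every unlearnable sample the
negative sigmoid of the adversarial margin lies in `[1/(1+exp(4C₁³)), 1]`. -/
theorem stmt12 :
    ∃ C1 C : ℝ, 0 < C1 ∧ 0 < C ∧
      ∀ S : Setting, S.ATDyn → S.EventE → S.CondH C → S.SparseRegime C →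
        ∀ t : ℕ,
          S.rhoHatMax t ≤ C1 / (((S.m : ℝ) * S.P) ^ ((1 : ℝ) / 3) * S.sigman ^ 2 * S.d) →
          ∀ i ∈ S.SU,
            1 / (1 + Real.exp (4 * C1 ^ 3)) ≤ psi (S.marg t i) ∧ psi (S.marg t i) ≤ 1 := by
  exact ⟨1, 10000, one_pos, by norm_num, fun S hdyn hE hH hS t ht i hi =>
    psi_marg_bounds_of_rhoHatMax_le le_rfl le_rfl (by norm_num) hdyn hE hH hS ht hi⟩

end AD

end
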